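/- For every n ≥ 3, every finite family of at least (C(2n−5, n−2) + 1) · C(2n−4, n−2) + 1 pairwise disjoint nonempty compact convex subsets of ℝ² in general position contains a subfamily of n sets in convex position, where C(a, b) denotes the binomial coefficient a choose b. -/

import Mathlib

open Set

noncomputable section

/-- The Euclidean plane. -/
abbrev Plane : Type := EuclideanSpace ℝ (Fin 2)

/-- The 2×2 determinant of two plane vectors. -/
def det2 (u v : Plane) : ℝ := u 0 * v 1 - u 1 * v 0

/-- A convex body in the plane: nonempty, compact and convex. -/
def ConvexBody2 (A : Set Plane) : Prop := A.Nonempty ∧ IsCompact A ∧ Convex ℝ A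

/-- A family of sets is in convex position if removing any member changes the
convex hull of the union of the family. -/
def ConvexPos (F : Set (Set Plane)) : Prop :=
  ∀ A ∈ F, convexHull ℝ (⋃₀ F) ≠ convexHull ℝ (⋃₀ (F \ {A}))

/-- A family is in general position if every 3-element subfamily is in convex position. -/
def GenPos (F : Set (Set Plane)) : Prop :=
  ∀ G ⊆ F, G.ncard = 3 → ConvexPos G

/-- Two sets are noncrossing if both set differences are connected. -/
def NoncrossingPair (A B : Set Plane) : Prop := IsConnected (A \ B) ∧ IsConnected (B \ A)

/-- Two convex bodies are tangent if they intersect but their interiors are disjoint. -/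
def TangentBodies (A B : Set Plane) : Prop :=
  (A ∩ B).Nonempty ∧ interior A ∩ interior B = ∅

/-- The line `{x | f x = c}` (for `f ≠ 0`) is tangent to `A`:
it meets `A` and `A` lies in one of the two closed half-planes it bounds. -/
def TangentLineTo (f : Plane →ₗ[ℝ] ℝ) (c : ℝ) (A : Set Plane) : Prop :=
  (∃ x ∈ A, f x = c) ∧ ((∀ x ∈ A, f x ≤ c) ∨ (∀ x ∈ A, c ≤ f x))

/-- No line is tangent to three distinct members of the family. -/
def NoTripleTangentLine (F : Set (Set Plane)) : Prop :=
  ∀ f : Plane →ₗ[ℝ] ℝ, f ≠ 0 → ∀ c : ℝ, ∀ A ∈ F, ∀ B ∈ F, ∀ C ∈ F,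
    A ≠ B → B ≠ C → A ≠ C →
    ¬ (TangentLineTo f c A ∧ TangentLineTo f c B ∧ TangentLineTo f c C)

/-- The ordered triple `(A₁, A₂, A₃)` is counterclockwise oriented. -/
def CCWOriented (A₁ A₂ A₃ : Set Plane) : Prop :=
  ∃ a₁ ∈ A₁ ∩ frontier (convexHull ℝ (A₁ ∪ A₂ ∪ A₃)),
  ∃ a₂ ∈ A₂ ∩ frontier (convexHull ℝ (A₁ ∪ A₂ ∪ A₃)),
  ∃ a₃ ∈ A₃ ∩ frontier (convexHull ℝ (A₁ ∪ A₂ ∪ A₃)),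
    0 < det2 (a₂ - a₁) (a₃ - a₁)

/-- The ordered triple `(A₁, A₂, A₃)` is clockwise oriented. -/
def CWOriented (A₁ A₂ A₃ : Set Plane) : Prop :=
  ∃ a₁ ∈ A₁ ∩ frontier (convexHull ℝ (A₁ ∪ A₂ ∪ A₃)),
  ∃ a₂ ∈ A₂ ∩ frontier (convexHull ℝ (A₁ ∪ A₂ ∪ A₃)),
  ∃ a₃ ∈ A₃ ∩ frontier (convexHull ℝ (A₁ ∪ A₂ ∪ A₃)),
    det2 (a₂ - a₁) (a₃ - a₁) < 0

/-- An affine line in the plane: an affine subspace with 1-dimensional direction. -/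
def IsLine (L : AffineSubspace ℝ Plane) : Prop := Module.finrank ℝ L.direction = 1

/-- `L` is a transversal line of the family `F`. -/
def TransversalLine (L : AffineSubspace ℝ Plane) (F : Set (Set Plane)) : Prop :=
  IsLine L ∧ ∀ A ∈ F, ((L : Set Plane) ∩ A).Nonempty

/-!
Let `x₀` be a point of the bodies that is farthest from the origin. Seen from `x₀`, the bodies not
containing it lie in an open half-plane, so each occupies an interval of directions. Among
sufficiently many intervals there are either many that are pairwise disjoint or many that share a
direction, in which case a single line meets all the corresponding bodies.

In both cases the bodies are linearly ordered and every increasing triple gets one of two colours,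
according to which part of the boundary of the convex hull shows the middle body: the left or the
right one for bodies met by a vertical line, the one near `x₀` or the one far from it for bodies
with disjoint intervals of directions. Both colours are transitive, so the binomial bound of the
cups-and-caps theorem gives a large set of bodies with all triples of one colour.

Bodies are in convex position as soon as each of their support functions strictly exceeds the
others in some direction. In a monochromatic set this follows from the triples, because the support
functions of two disjoint bodies agree in exactly two directions, and the profiles replacing them
after a projective map that sends `x₀` to infinity cross exactly once. On the far side the body
containing `x₀` can be added to the set, so a clique smaller by one suffices there.
-/

/-! ### Transitive colourings of triples -/

section Triples

variable {ι : Type*} [LinearOrder ι] {R B : ι → ι → ι → Prop}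

/-- A relation on increasing triples is transitive if, on any four increasing indices, it passes
from the first and last consecutive triples to the two remaining ones. -/
def TransitiveTriples (R : ι → ι → ι → Prop) : Prop :=
  ∀ ⦃x y z w⦄, x < y → y < z → z < w → R x y z → R y z w → R x y w ∧ R x z w

/-- A clique of a relation on increasing triples: all increasing triples from the set satisfy the
relation. -/
def TripleClique (R : ι → ι → ι → Prop) (G : Set ι) : Prop :=
  ∀ ⦃x⦄, x ∈ G → ∀ ⦃y⦄, y ∈ G → ∀ ⦃z⦄, z ∈ G → x < y → y < z → R x y z

lemma TransitiveTriples.dual (hR : TransitiveTriples R) :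
    TransitiveTriples fun x y z : ιᵒᵈ ↦
      R (OrderDual.ofDual z) (OrderDual.ofDual y) (OrderDual.ofDual x) :=
  fun _ _ _ _ hxy hyz hzw hxyz hyzw ↦ (hR hzw hyz hxy hyzw hxyz).symm

lemma TripleClique.dual {G : Set ι} (hG : TripleClique R G) :
    TripleClique (fun x y z : ιᵒᵈ ↦
      R (OrderDual.ofDual z) (OrderDual.ofDual y) (OrderDual.ofDual x)) (OrderDual.ofDual ⁻¹' G) :=
  fun _ hx _ hy _ hz hxy hyz ↦ hG hz hy hx hyz hxy

lemma TripleClique.of_card_eq_two {G : Finset ι} (hG : G.card = 2) : TripleClique R G := by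
  intro x hx y hy z hz hxy hyz
  have : 2 < G.card :=
    Finset.two_lt_card.2 ⟨x, hx, y, hy, z, hz, hxy.ne, (hxy.trans hyz).ne, hyz.ne⟩
  omega

lemma TripleClique.insert_top (hR : TransitiveTriples R) {Q : Set ι} (hQ : TripleClique R Q)
    {u v w : ι} (hv : IsGreatest Q v) (hu : IsGreatest (Q \ {v}) u) (hvw : v < w)
    (huvw : R u v w) : TripleClique R (insert w Q) := by
  have huv : u < v := (hv.2 hu.1.1).lt_of_ne hu.1.2
  have below_u : ∀ x ∈ Q, x < u → R x u w ∧ R x v w := fun x hx hxu ↦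
    hR hxu huv hvw (hQ hx hu.1.1 hv.1 hxu huv) huvw
  have le_u : ∀ x ∈ Q, x < v → x ≤ u := fun x hx hxv ↦ hu.2 ⟨hx, hxv.ne⟩
  have last_w : ∀ x ∈ Q, ∀ y ∈ Q, x < y → R x y w := by
    intro x hx y hy hxy
    rcases (hv.2 hy).eq_or_lt with rfl | hyv
    · rcases (le_u x hx hxy).eq_or_lt with rfl | hxu
      · exact huvw
      · exact (below_u x hx hxu).2
    · rcases (le_u y hy hyv).eq_or_lt with rfl | hyu
      · exact (below_u x hx hxy).1
      · exact (hR hxy hyu (huv.trans hvw) (hQ hx hy hu.1.1 hxy hyu) (below_u y hy hyu).1).1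
  have lt_w : ∀ x ∈ insert w Q, x < w → x ∈ Q := fun x hx hxw ↦ hx.resolve_left hxw.ne
  have le_w : ∀ x ∈ insert w Q, x ≤ w := by
    rintro x (rfl | hx)
    exacts [le_rfl, (hv.2 hx).trans hvw.le]
  intro x hx y hy z hz hxy hyz
  have hyQ : y ∈ Q := lt_w y hy (hyz.trans_le (le_w z hz))
  have hxQ : x ∈ Q := lt_w x hx (hxy.trans_le (le_w y hy))
  rcases hz with rfl | hz
  · exact last_w x hxQ y hyQ hxy
  · exact hQ hxQ hyQ hz hxy hyz

lemma TripleClique.insert_bot (hR : TransitiveTriples R) {Q : Set ι} (hQ : TripleClique R Q)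
    {u v w : ι} (hv : IsLeast Q v) (hu : IsLeast (Q \ {v}) u) (hwv : w < v)
    (hwvu : R w v u) : TripleClique R (insert w Q) :=
  (hQ.dual.insert_top hR.dual hv.dual hu.dual hwv hwvu).dual

lemma TripleClique.insert_top_or_insert_bot (hR : TransitiveTriples R)
    (hB : TransitiveTriples B) (hRB : ∀ ⦃x y z⦄, x < y → y < z → R x y z ∨ B x y z)
    {Q G : Finset ι} {v : ι} (hQ : TripleClique R Q) (hG : TripleClique B G)
    (hvQ : IsGreatest (Q : Set ι) v) (hvG : IsLeast (G : Set ι) v)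
    (hQ2 : 1 < Q.card) (hG2 : 1 < G.card) :
    (∃ w ∈ G, w ∉ Q ∧ TripleClique R (insert w (Q : Set ι))) ∨
      ∃ u ∈ Q, u ∉ G ∧ TripleClique B (insert u (G : Set ι)) := by
  have hQe : (Q.erase v).Nonempty := (Finset.erase_nonempty hvQ.1).2
    (Finset.one_lt_card_iff_nontrivial.1 hQ2)
  have hGe : (G.erase v).Nonempty := (Finset.erase_nonempty hvG.1).2
    (Finset.one_lt_card_iff_nontrivial.1 hG2)
  have hu := (Q.erase v).isGreatest_max' hQe
  have hw := (G.erase v).isLeast_min' hGe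
  set u := (Q.erase v).max' hQe
  set w := (G.erase v).min' hGe
  rw [Finset.coe_erase] at hu hw
  have huv : u < v := (hvQ.2 hu.1.1).lt_of_ne hu.1.2
  have hvw : v < w := (hvG.2 hw.1.1).lt_of_ne' hw.1.2
  rcases hRB huv hvw with h | h
  · exact .inl ⟨w, hw.1.1, fun hwQ ↦ (hvQ.2 hwQ).not_gt hvw, hQ.insert_top hR hvQ hu hvw h⟩
  · exact .inr ⟨u, hu.1.1, fun huG ↦ (hvG.2 huG).not_gt huv, hG.insert_bot hB hvG hw huv h⟩

theorem exists_tripleClique_or_tripleClique (hR : TransitiveTriples R)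
    (hB : TransitiveTriples B) (hRB : ∀ ⦃x y z⦄, x < y → y < z → R x y z ∨ B x y z) (a b : ℕ)
    {S : Finset ι} (hS : (a + b).choose a < S.card) :
    (∃ G ⊆ S, G.card = a + 2 ∧ TripleClique R G) ∨
      ∃ G ⊆ S, G.card = b + 2 ∧ TripleClique B G := by
  have pair {S : Finset ι} (h : 1 < S.card) (R : ι → ι → ι → Prop) :
      ∃ G ⊆ S, G.card = 2 ∧ TripleClique R G :=
    (Finset.exists_subset_card_eq h).imp fun _ hG ↦ ⟨hG.1, hG.2, .of_card_eq_two hG.2⟩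
  induction a generalizing b S with
  | zero => exact .inl (pair (by simpa using hS) R)
  | succ a iha =>
  induction b generalizing S with
  | zero => exact .inr (pair (by simpa using hS) B)
  | succ b ihb =>
  classical
  -- The indices at which some `R`-clique of size `a + 2` ends.
  let T : Finset ι :=
    {v ∈ S | ∃ Q ⊆ S, Q.card = a + 2 ∧ TripleClique R Q ∧ IsGreatest (Q : Set ι) v}
  have hTS : T ⊆ S := Finset.filter_subset _ _
  have hsplit : (a + (b + 1)).choose a < (S \ T).card ∨ (a + 1 + b).choose (a + 1) < T.card := by
    have hcard := Finset.card_sdiff_add_card_eq_card hTS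
    have hchoose : (a + 1 + (b + 1)).choose (a + 1) =
        (a + (b + 1)).choose a + (a + 1 + b).choose (a + 1) := by
      rw [show a + 1 + (b + 1) = a + (b + 1) + 1 by ring, Nat.choose_succ_succ,
        show a + (b + 1) = a + 1 + b by ring]
    omega
  have mono {U : Finset ι} (hU : U ⊆ S) {n : ℕ} {R : ι → ι → ι → Prop} :
      (∃ G ⊆ U, G.card = n ∧ TripleClique R G) → ∃ G ⊆ S, G.card = n ∧ TripleClique R G :=
    fun ⟨G, hG, h⟩ ↦ ⟨G, hG.trans hU, h⟩
  rcases hsplit with hsplit | hsplit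
  · rcases iha (b + 1) hsplit with ⟨Q, hQ, hQcard, hQR⟩ | hB
    · have hne : Q.Nonempty := Finset.card_pos.1 (by omega)
      have hmem := Finset.mem_sdiff.1 (hQ (Q.max'_mem hne))
      exact absurd (Finset.mem_filter.2 ⟨hmem.1, Q, hQ.trans Finset.sdiff_subset, hQcard, hQR,
        Q.isGreatest_max' hne⟩) hmem.2
    · exact .inr (mono Finset.sdiff_subset hB)
  · rcases ihb hsplit with hR | ⟨G, hG, hGcard, hGB⟩
    · exact .inl (mono hTS hR)
    have hne : G.Nonempty := Finset.card_pos.1 (by omega)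
    obtain ⟨-, Q, hQS, hQcard, hQR, hvQ⟩ := Finset.mem_filter.1 (hG (G.min'_mem hne))
    rcases hQR.insert_top_or_insert_bot hR hB hRB hGB hvQ (G.isLeast_min' hne)
      (by omega) (by omega) with ⟨w, hwG, hwQ, hw⟩ | ⟨u, huQ, huG, hu⟩
    · refine .inl ⟨insert w Q, Finset.insert_subset (hTS (hG hwG)) hQS, ?_, by simpa using hw⟩
      rw [Finset.card_insert_of_notMem hwQ, hQcard]
    · refine .inr ⟨insert u G, Finset.insert_subset (hQS huQ) (hG.trans hTS), ?_,
        by simpa using hu⟩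
      rw [Finset.card_insert_of_notMem huG, hGcard]

end Triples

/-! ### Disjoint or concurrent intervals -/

theorem exists_pairwiseDisjoint_or_common_mem {ι β : Type*} [LinearOrder β] {I : ι → Set β}
    (hI : ∀ i, (I i).OrdConnected) {r : ι → β} (hr : ∀ i, IsGreatest (I i) (r i)) (K L : ℕ)
    {S : Finset ι} (hS : K * L < S.card) :
    (∃ T ⊆ S, T.card = K + 1 ∧ (T : Set ι).PairwiseDisjoint I) ∨
      ∃ T ⊆ S, T.card = L + 1 ∧ ∃ c, ∀ i ∈ T, c ∈ I i := by
  classical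
  induction K generalizing S with
  | zero =>
    obtain ⟨x, hx⟩ := Finset.card_pos.1 (by omega : 0 < S.card)
    exact .inl ⟨{x}, by simpa using hx, by simp, by simp⟩
  | succ K ih =>
  obtain ⟨m, hm, hmin⟩ := S.exists_min_image r (Finset.card_pos.1 (by omega))
  by_cases hL : L + 1 ≤ ({i ∈ S | r m ∈ I i} : Finset ι).card
  · obtain ⟨T, hT, hTcard⟩ := Finset.exists_subset_card_eq hL
    exact .inr ⟨T, hT.trans (Finset.filter_subset _ _), hTcard, r m,
      fun i hi ↦ (Finset.mem_filter.1 (hT hi)).2⟩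
  have hK : K * L < ({i ∈ S | r m ∉ I i} : Finset ι).card := by
    have := Finset.card_filter_add_card_filter_not (s := S) (fun i ↦ r m ∈ I i)
    rw [add_mul] at hS
    omega
  rcases ih hK with ⟨T, hT, hTcard, hdisj⟩ | ⟨T, hT, h⟩
  · have hmem : ∀ i ∈ T, i ∈ S ∧ r m ∉ I i := fun i hi ↦ Finset.mem_filter.1 (hT hi)
    have hmT : m ∉ T := fun h ↦ (hmem m h).2 (hr m).1
    refine .inl ⟨insert m T, Finset.insert_subset hm fun i hi ↦ (hmem i hi).1,
      by rw [Finset.card_insert_of_notMem hmT, hTcard], ?_⟩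
    rw [Finset.coe_insert, Set.pairwiseDisjoint_insert_of_notMem (by simpa using hmT)]
    refine ⟨hdisj, fun i hi ↦ Set.disjoint_left.2 fun x hxm hxi ↦ (hmem i hi).2 ?_⟩
    exact (hI i).out hxi (hr i).1 ⟨(hr m).2 hxm, hmin i (hmem i hi).1⟩
  · exact .inr ⟨T, hT.trans (Finset.filter_subset _ _), h⟩

/-! ### Upper envelopes -/

section Envelope

variable {ι X : Type*}

/-- The function `f i` appears on the upper envelope of the functions indexed by `T`: somewhere it
strictly exceeds all the others. -/
def OnUpperEnvelope (f : ι → X → ℝ) (T : Finset ι) (i : ι) : Prop :=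
  ∃ x, ∀ j ∈ T, j ≠ i → f j x < f i x

/-- Each function appears on the upper envelope of any triple containing it; for support functions
of convex bodies this is general position. -/
def TripleEnvelope (f : ι → X → ℝ) : Prop :=
  ∀ ⦃i j k⦄, i ≠ j → i ≠ k → j ≠ k → ∃ x, f j x < f i x ∧ f k x < f i x

/-- Some `k` of the functions all appear on the upper envelope of these `k` functions. -/
def HasEnvelope (f : ι → X → ℝ) (k : ℕ) : Prop :=
  ∃ G : Finset ι, G.card = k ∧ ∀ i ∈ G, OnUpperEnvelope f G i

variable {κ Y : Type*} {f : ι → X → ℝ} {g : ι → Y → ℝ} {k : ℕ}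

lemma TripleEnvelope.of_forall_exists (hf : TripleEnvelope f)
    (h : ∀ x, ∃ y, ∀ i j, f i x < f j x → g i y < g j y) : TripleEnvelope g := by
  intro i j k hij hik hjk
  obtain ⟨x, hj, hk⟩ := hf hij hik hjk
  obtain ⟨y, hy⟩ := h x
  exact ⟨y, hy _ _ hj, hy _ _ hk⟩

lemma TripleEnvelope.comp_injective (hf : TripleEnvelope f) {e : κ → ι} (he : e.Injective) :
    TripleEnvelope (f ∘ e) :=
  fun _ _ _ hij hik hjk ↦ hf (he.ne hij) (he.ne hik) (he.ne hjk)

lemma HasEnvelope.of_forall_exists (hf : HasEnvelope f k)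
    (h : ∀ x, ∃ y, ∀ i j, f i x < f j x → g i y < g j y) : HasEnvelope g k := by
  obtain ⟨G, hcard, hG⟩ := hf
  refine ⟨G, hcard, fun i hi ↦ ?_⟩
  obtain ⟨x, hx⟩ := hG i hi
  obtain ⟨y, hy⟩ := h x
  exact ⟨y, fun j hj hji ↦ hy _ _ (hx j hj hji)⟩

lemma HasEnvelope.of_comp (e : κ ↪ ι) (hf : HasEnvelope (f ∘ e) k) : HasEnvelope f k := by
  obtain ⟨G, hcard, hG⟩ := hf
  refine ⟨G.map e, by rwa [Finset.card_map], ?_⟩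
  simp only [Finset.forall_mem_map]
  intro i hi
  obtain ⟨x, hx⟩ := hG i hi
  refine ⟨x, ?_⟩
  simp only [Finset.forall_mem_map]
  exact fun j hj hji ↦ hx j hj (ne_of_apply_ne e hji)

end Envelope

/-! ### Periodic functions crossing twice per period -/

section Crossing

open Real

/-- Over the period starting at `a`, the graphs of `f` and `g` meet exactly at `a` and `b`, with `f`
above `g` on `(a, b)` and below it afterwards. -/
structure CrossesAt (f g : ℝ → ℝ) (a b : ℝ) : Prop where
  eq_left : f a = g a
  eq_right : f b = g b
  gt_of_mem : ∀ θ ∈ Ioo a b, g θ < f θ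
  lt_of_mem : ∀ θ ∈ Ioo b (a + 2 * π), f θ < g θ

namespace CrossesAt

variable {f g : ℝ → ℝ} {a b θ : ℝ}

lemma ge_of_mem (h : CrossesAt f g a b) (hθ : θ ∈ Icc a b) : g θ ≤ f θ := by
  rcases hθ.1.eq_or_lt with rfl | ha
  · exact h.eq_left.ge
  rcases hθ.2.eq_or_lt with rfl | hb
  · exact h.eq_right.ge
  exact (h.gt_of_mem θ ⟨ha, hb⟩).le

lemma le_of_mem (h : CrossesAt f g a b) (hf : Function.Periodic f (2 * π))
    (hg : Function.Periodic g (2 * π)) (hθ : θ ∈ Icc b (a + 2 * π)) : f θ ≤ g θ := by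
  rcases hθ.1.eq_or_lt with rfl | hb
  · exact h.eq_right.le
  rcases hθ.2.eq_or_lt with rfl | ha
  · rw [hf, hg, h.eq_left]
  exact (h.lt_of_mem θ ⟨hb, ha⟩).le

lemma mem_Ioo_of_gt (h : CrossesAt f g a b) (hf : Function.Periodic f (2 * π))
    (hg : Function.Periodic g (2 * π)) (hθ : θ ∈ Icc (b - 2 * π) (a + 2 * π)) (hlt : g θ < f θ) :
    θ ∈ Ioo a b := by
  constructor <;> by_contra! hc
  · refine (h.le_of_mem hf hg (θ := θ + 2 * π) ⟨?_, ?_⟩).not_gt (by rwa [hf, hg]) <;>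
      linarith [hθ.1]
  · exact (h.le_of_mem hf hg ⟨hc, hθ.2⟩).not_gt hlt

lemma mem_Ioo_of_lt (h : CrossesAt f g a b) (hf : Function.Periodic f (2 * π))
    (hg : Function.Periodic g (2 * π)) (hθ : θ ∈ Icc a (b + 2 * π)) (hlt : f θ < g θ) :
    θ ∈ Ioo b (a + 2 * π) := by
  constructor <;> by_contra! hc
  · exact (h.ge_of_mem ⟨hθ.1, hc⟩).not_gt hlt
  · refine (h.ge_of_mem (θ := θ - 2 * π) ⟨?_, ?_⟩).not_gt (by rwa [hf.sub_eq, hg.sub_eq]) <;>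
      linarith [hθ.2]

end CrossesAt

/-- The combinatorial data carried by the support functions `H i`, in the direction of angle `θ`, of
disjoint convex bodies met by the vertical axis and ordered upwards along it. Two of them cross at
`a i j` and `b i j`, while `m j` and `n i` are a downward and an upward direction separating body
`j` from the bodies below it and body `i` from the bodies above it. -/
structure CrossingSystem {ι : Type*} [LinearOrder ι] (H : ι → ℝ → ℝ) (a b : ι → ι → ℝ)
    (m n : ι → ℝ) : Prop where
  periodic : ∀ i, Function.Periodic (H i) (2 * π)
  crosses : ∀ ⦃i j⦄, i < j → CrossesAt (H i) (H j) (a i j) (b i j)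
  a_mem : ∀ ⦃i j⦄, i < j → a i j ∈ Ioo (-2 * π) 0
  b_mem : ∀ ⦃i j⦄, i < j → b i j ∈ Ioo (-π) π
  m_mem : ∀ j, m j ∈ Ioo (-π) 0
  n_mem : ∀ i, n i ∈ Ioo 0 π
  lt_at_m : ∀ ⦃i j⦄, i < j → H j (m j) < H i (m j)
  lt_at_n : ∀ ⦃i j⦄, i < j → H i (n i) < H j (n i)
  tripleEnvelope : TripleEnvelope H

namespace CrossingSystem

variable {ι : Type*} [LinearOrder ι] {H : ι → ℝ → ℝ} {a b : ι → ι → ℝ} {m n : ι → ℝ}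
  {i j k : ι} {θ : ℝ}

lemma mirror (h : CrossingSystem H a b m n) :
    CrossingSystem (fun i θ ↦ H i (-π - θ)) (fun i j ↦ -π - b i j) (fun i j ↦ -π - a i j)
      (fun j ↦ -π - m j) (fun i ↦ π - n i) where
  periodic i θ := by
    have := h.periodic i (-π - (θ + 2 * π))
    ring_nf at this ⊢
    exact this.symm
  crosses i j hij :=
    { eq_left := by simpa using (h.crosses hij).eq_right
      eq_right := by simpa using (h.crosses hij).eq_left
      gt_of_mem θ hθ := (h.crosses hij).gt_of_mem _ ⟨by linarith [hθ.2], by linarith [hθ.1]⟩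
      lt_of_mem θ hθ := by
        rw [← h.periodic i, ← h.periodic j]
        exact (h.crosses hij).lt_of_mem _ ⟨by linarith [hθ.2], by linarith [hθ.1]⟩ }
  a_mem i j hij := ⟨by linarith [(h.b_mem hij).2], by linarith [(h.b_mem hij).1]⟩
  b_mem i j hij := ⟨by linarith [(h.a_mem hij).2], by linarith [(h.a_mem hij).1]⟩
  m_mem j := ⟨by linarith [(h.m_mem j).2], by linarith [(h.m_mem j).1]⟩
  n_mem i := ⟨by linarith [(h.n_mem i).2], by linarith [(h.n_mem i).1]⟩
  lt_at_m i j hij := by simpa using h.lt_at_m hij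
  lt_at_n i j hij := by
    rw [show -π - (π - n i) = n i - 2 * π by ring, (h.periodic i).sub_eq, (h.periodic j).sub_eq]
    exact h.lt_at_n hij
  tripleEnvelope i j k hij hik hjk := by
    obtain ⟨θ, hθ⟩ := h.tripleEnvelope hij hik hjk
    exact ⟨-π - θ, by simpa using hθ⟩

lemma m_mem_Ioo (h : CrossingSystem H a b m n) (hij : i < j) : m j ∈ Ioo (a i j) (b i j) :=
  (h.crosses hij).mem_Ioo_of_gt (h.periodic i) (h.periodic j)
    ⟨by linarith [(h.m_mem j).1, (h.b_mem hij).2], by linarith [(h.m_mem j).2, (h.a_mem hij).1]⟩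
    (h.lt_at_m hij)

lemma n_mem_Ioo (h : CrossingSystem H a b m n) (hij : i < j) :
    n i ∈ Ioo (b i j) (a i j + 2 * π) :=
  (h.crosses hij).mem_Ioo_of_lt (h.periodic i) (h.periodic j)
    ⟨by linarith [(h.n_mem i).1, (h.a_mem hij).2], by linarith [(h.n_mem i).2, (h.b_mem hij).1]⟩
    (h.lt_at_n hij)

lemma mem_Ioo_of_gt (h : CrossingSystem H a b m n) (hij : i < j)
    (hθ : θ ∈ Ico (n i - 2 * π) (n i)) (hlt : H j θ < H i θ) : θ ∈ Ioo (a i j) (b i j) :=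
  (h.crosses hij).mem_Ioo_of_gt (h.periodic i) (h.periodic j)
    ⟨by linarith [hθ.1, (h.n_mem_Ioo hij).1], by linarith [hθ.2, (h.n_mem_Ioo hij).2]⟩ hlt

lemma mem_Ioo_of_lt (h : CrossingSystem H a b m n) (hij : i < j)
    (hθ : θ ∈ Ico (m j) (m j + 2 * π)) (hlt : H i θ < H j θ) :
    θ ∈ Ioo (b i j) (a i j + 2 * π) :=
  (h.crosses hij).mem_Ioo_of_lt (h.periodic i) (h.periodic j)
    ⟨by linarith [hθ.1, (h.m_mem_Ioo hij).1], by linarith [hθ.2, (h.m_mem_Ioo hij).2]⟩ hlt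

lemma exists_mem_Ico (h : CrossingSystem H a b m n) (hij : i ≠ j) (hik : i ≠ k) (hjk : j ≠ k)
    (c : ℝ) : ∃ θ ∈ Ico c (c + 2 * π), H j θ < H i θ ∧ H k θ < H i θ := by
  obtain ⟨θ, hj, hk⟩ := h.tripleEnvelope hij hik hjk
  have hmod (l : ι) : H l (toIcoMod two_pi_pos c θ) = H l θ := (h.periodic l).sub_zsmul_eq _
  exact ⟨_, toIcoMod_mem_Ico two_pi_pos c θ, by simpa only [hmod] using ⟨hj, hk⟩⟩

lemma right_right (h : CrossingSystem H a b m n) (hij : i < j) (hik : i < k) (hjk : j ≠ k) :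
    a i j < b i k := by
  obtain ⟨θ, hθ, hj, hk⟩ := h.exists_mem_Ico hij.ne hik.ne hjk (n i - 2 * π)
  rw [sub_add_cancel] at hθ
  exact (h.mem_Ioo_of_gt hij hθ hj).1.trans (h.mem_Ioo_of_gt hik hθ hk).2

lemma left_left (h : CrossingSystem H a b m n) (hij : i < j) (hkj : k < j) (hik : i ≠ k) :
    b i j < a k j + 2 * π := by
  obtain ⟨θ, hθ, hi, hk⟩ := h.exists_mem_Ico hij.ne' hkj.ne' hik (m j)
  exact (h.mem_Ioo_of_lt hij hθ hi).1.trans (h.mem_Ioo_of_lt hkj hθ hk).2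

lemma right_left (h : CrossingSystem H a b m n) (hij : i < j) (hjk : j < k) :
    a j k < a i j + 2 * π :=
  calc a j k < m k := (h.m_mem_Ioo hjk).1
    _ < n i := (h.m_mem k).2.trans (h.n_mem i).1
    _ < a i j + 2 * π := (h.n_mem_Ioo hij).2

lemma b_lt_b_or_a_lt_a (h : CrossingSystem H a b m n) (hij : i < j) (hjk : j < k) :
    b i j < b j k ∨ a j k < a i j := by
  obtain ⟨θ, hθ, hi, hk⟩ := h.exists_mem_Ico hij.ne' hjk.ne (hij.trans hjk).ne (n j - 2 * π)
  rw [sub_add_cancel] at hθ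
  obtain ⟨ha, hb⟩ := h.mem_Ioo_of_gt hjk hθ hk
  by_contra! hc
  exact ((h.crosses hij).gt_of_mem θ ⟨hc.2.trans_lt ha, hb.trans_le hc.1⟩).not_gt hi

lemma transitiveTriples (h : CrossingSystem H a b m n) :
    TransitiveTriples fun i j k ↦ b i j < b j k := by
  intro x y z w hxy hyz hzw hxyz hyzw
  constructor
  · -- Otherwise some `θ` has `H z < H y`, `H w < H z` and `H y < H w`.
    by_contra! hc
    obtain ⟨θ, hlo, hθ⟩ := exists_between (max_lt (max_lt hxyz (h.m_mem_Ioo hyz).2)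
      ((h.m_mem_Ioo (hyz.trans hzw)).2.trans_le (hc.trans hxyz.le)))
    simp only [max_lt_iff] at hlo
    have hzy := (h.crosses hyz).gt_of_mem θ ⟨(h.m_mem_Ioo hyz).1.trans hlo.1.2, hθ⟩
    have hwz := (h.crosses hzw).gt_of_mem θ ⟨(h.m_mem_Ioo hzw).1.trans hlo.2, hθ.trans hyzw⟩
    have hyw := (h.crosses (hyz.trans hzw)).lt_of_mem θ ⟨hc.trans_lt hlo.1.1,
      by linarith [h.n_mem_Ioo hyz, (h.n_mem_Ioo (hyz.trans hzw)).2, (h.n_mem_Ioo hyz).1]⟩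
    exact (hwz.trans hzy).not_gt hyw
  · -- Otherwise some `θ` has `H y < H z`, `H x < H y` and `H z < H x`.
    suffices b x z ≤ b y z from this.trans_lt hyzw
    by_contra! hc
    obtain ⟨θ, hlo, hθ⟩ := exists_between (lt_min hc (h.n_mem_Ioo hyz).1)
    rw [lt_min_iff] at hθ
    have hyz' := (h.crosses hyz).lt_of_mem θ ⟨hlo, hθ.2.trans (h.n_mem_Ioo hyz).2⟩
    have hxy' := (h.crosses hxy).lt_of_mem θ ⟨hxyz.trans hlo,
      by linarith [(h.n_mem_Ioo hxy).2, (h.n_mem_Ioo (hxy.trans hyz)).1]⟩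
    have hzx := (h.crosses (hxy.trans hyz)).gt_of_mem θ
      ⟨by linarith [(h.m_mem_Ioo (hxy.trans hyz)).1, (h.m_mem_Ioo hyz).2], hθ.1⟩
    exact (hxy'.trans hyz').not_gt hzx

end CrossingSystem

lemma exists_forall_mem_Ioo {ι : Type*} (T : Finset ι) {lo hi : ι → ℝ}
    (h : ∀ x ∈ T, ∀ y ∈ T, lo x < hi y) : ∃ θ, ∀ x ∈ T, θ ∈ Ioo (lo x) (hi x) := by
  rcases T.eq_empty_or_nonempty with rfl | hT
  · exact ⟨0, by simp⟩
  obtain ⟨x, hx, hxmax⟩ := T.exists_max_image lo hT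
  obtain ⟨y, hy, hymin⟩ := T.exists_min_image hi hT
  obtain ⟨θ, hlo, hhi⟩ := exists_between (h x hx y hy)
  exact ⟨θ, fun z hz ↦ ⟨(hxmax z hz).trans_lt hlo, hhi.trans_le (hymin z hz)⟩⟩

namespace CrossingSystem

variable {ι : Type*} [LinearOrder ι] {H : ι → ℝ → ℝ} {a b : ι → ι → ℝ} {m n : ι → ℝ}

lemma onUpperEnvelope_of_tripleClique (h : CrossingSystem H a b m n) {G : Finset ι}
    (hG : TripleClique (fun i j k ↦ b i j < b j k) G) {j : ι} (hj : j ∈ G) :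
    OnUpperEnvelope H G j := by
  -- The window of angles where `j` beats `x`; any two windows meet, so all of them do.
  obtain ⟨θ, hθ⟩ := exists_forall_mem_Ioo (G.erase j)
    (lo := fun x ↦ if j < x then a j x else b x j)
    (hi := fun x ↦ if j < x then b j x else a x j + 2 * π) <| by
      intro x hx y hy
      obtain ⟨hxj, hx⟩ := Finset.mem_erase.1 hx
      obtain ⟨hyj, hy⟩ := Finset.mem_erase.1 hy
      rcases eq_or_ne x y with rfl | hxy
      · split_ifs with hjx
        · exact (h.m_mem_Ioo hjx).1.trans (h.m_mem_Ioo hjx).2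
        · have hxj := (not_lt.1 hjx).lt_of_ne hxj
          exact (h.n_mem_Ioo hxj).1.trans (h.n_mem_Ioo hxj).2
      split_ifs with hjx hjy hjy
      · exact h.right_right hjx hjy hxy
      · exact h.right_left ((not_lt.1 hjy).lt_of_ne hyj) hjx
      · exact hG hx hj hy ((not_lt.1 hjx).lt_of_ne hxj) hjy
      · exact h.left_left ((not_lt.1 hjx).lt_of_ne hxj) ((not_lt.1 hjy).lt_of_ne hyj) hxy
  refine ⟨θ, fun k hk hkj ↦ ?_⟩
  have hkθ := hθ k (Finset.mem_erase.2 ⟨hkj, hk⟩)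
  split_ifs at hkθ with hjk
  · exact (h.crosses hjk).gt_of_mem θ hkθ
  · exact (h.crosses ((not_lt.1 hjk).lt_of_ne hkj)).lt_of_mem θ hkθ

theorem hasEnvelope [Fintype ι] (h : CrossingSystem H a b m n) (p : ℕ)
    (hcard : (p + p).choose p < Fintype.card ι) : HasEnvelope H (p + 2) := by
  rcases exists_tripleClique_or_tripleClique h.transitiveTriples h.mirror.transitiveTriples
      (fun i j k hij hjk ↦ (h.b_lt_b_or_a_lt_a hij hjk).imp_right (by simp)) p p hcard with
    ⟨G, -, hG_card, hG⟩ | ⟨G, -, hG_card, hG⟩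
  · exact ⟨G, hG_card, fun j hj ↦ h.onUpperEnvelope_of_tripleClique hG hj⟩
  · refine ⟨G, hG_card, fun j hj ↦ ?_⟩
    obtain ⟨θ, hθ⟩ := h.mirror.onUpperEnvelope_of_tripleClique hG hj
    exact ⟨-π - θ, hθ⟩

end CrossingSystem

end Crossing

lemma exists_forall_ne_of_neighbours {ι X : Type*} [LinearOrder ι] {D : ι → X → Prop}
    {G : Finset ι} {j : ι} {U : Set X} (hU : U.Nonempty)
    (left : ∀ x ∈ U, ∀ k ∈ G, ∀ l ∈ G, k ≤ l → l < j → D l x → D k x)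
    (right : ∀ x ∈ U, ∀ k ∈ G, ∀ l ∈ G, l ≤ k → j < l → D l x → D k x)
    (one : ∀ k ∈ G, k ≠ j → ∃ x ∈ U, D k x)
    (two : ∀ k ∈ G, ∀ l ∈ G, k < j → j < l → ∃ x ∈ U, D k x ∧ D l x) :
    ∃ x ∈ U, ∀ k ∈ G, k ≠ j → D k x := by
  have toLeft : (∀ k ∈ G, ¬ k < j) ∨ ∃ l ∈ G, l < j ∧ ∀ k ∈ G, k < j → k ≤ l := by
    rcases ({k ∈ G | k < j} : Finset ι).eq_empty_or_nonempty with h | h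
    · exact .inl (Finset.filter_eq_empty_iff.1 h)
    · obtain ⟨l, hl, hmax⟩ := Finset.exists_max_image _ id h
      simp only [Finset.mem_filter, id] at hl hmax
      exact .inr ⟨l, hl.1, hl.2, fun k hk hkj ↦ hmax k ⟨hk, hkj⟩⟩
  have toRight : (∀ k ∈ G, ¬ j < k) ∨ ∃ l ∈ G, j < l ∧ ∀ k ∈ G, j < k → l ≤ k := by
    rcases ({k ∈ G | j < k} : Finset ι).eq_empty_or_nonempty with h | h
    · exact .inl (Finset.filter_eq_empty_iff.1 h)
    · obtain ⟨l, hl, hmin⟩ := Finset.exists_min_image _ id h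
      simp only [Finset.mem_filter, id] at hl hmin
      exact .inr ⟨l, hl.1, hl.2, fun k hk hjk ↦ hmin k ⟨hk, hjk⟩⟩
  rcases toLeft with noLeft | ⟨k, hk, hkj, hkmax⟩ <;>
    rcases toRight with noRight | ⟨l, hl, hjl, hlmin⟩
  · obtain ⟨x, hx⟩ := hU
    exact ⟨x, hx, fun i hi hij ↦ hij.lt_or_gt.elim (absurd · (noLeft i hi))
      (absurd · (noRight i hi))⟩
  · obtain ⟨x, hx, hxl⟩ := one l hl hjl.ne'
    exact ⟨x, hx, fun i hi hij ↦ hij.lt_or_gt.elim (absurd · (noLeft i hi))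
      fun h ↦ right x hx i hi l hl (hlmin i hi h) hjl hxl⟩
  · obtain ⟨x, hx, hxk⟩ := one k hk hkj.ne
    exact ⟨x, hx, fun i hi hij ↦ hij.lt_or_gt.elim
      (fun h ↦ left x hx i hi k hk (hkmax i hi h) hkj hxk) (absurd · (noRight i hi))⟩
  · obtain ⟨x, hx, hxk, hxl⟩ := two k hk l hl hkj hjl
    exact ⟨x, hx, fun i hi hij ↦ hij.lt_or_gt.elim
      (fun h ↦ left x hx i hi k hk (hkmax i hi h) hkj hxk)
      fun h ↦ right x hx i hi l hl (hlmin i hi h) hjl hxl⟩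

/-! ### Pseudoline systems -/

section Pseudoline

/-- A family of functions any two of which cross exactly once, the function with the larger index
being the lower one before the crossing and the upper one after it. -/
structure PseudolineSystem {ι X : Type*} [LinearOrder ι] [LinearOrder X] (f : ι → X → ℝ) :
    Prop where
  lt_of_le : ∀ ⦃i j⦄, i < j → ∀ ⦃x y⦄, x < y → f i x ≤ f j x → f i y < f j y
  exists_gt : ∀ ⦃i j⦄, i < j → ∃ x, f j x < f i x
  exists_lt : ∀ ⦃i j⦄, i < j → ∃ x, f i x < f j x

/-- The middle function of the triple appears on the upper envelope of the triple. -/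
def MiddleOnTop {ι X : Type*} (f : ι → X → ℝ) (i j k : ι) : Prop :=
  ∃ x, f i x < f j x ∧ f k x < f j x

namespace PseudolineSystem

variable {ι X : Type*} [LinearOrder ι] [LinearOrder X] {f : ι → X → ℝ} {i j k l : ι} {x y : X}

lemma lt_of_ge_of_lt (h : PseudolineSystem f) (hij : i < j) (hxy : x ≤ y) (hlt : f i x < f j x) :
    f i y < f j y := by
  rcases hxy.eq_or_lt with rfl | hxy
  exacts [hlt, h.lt_of_le hij hxy hlt.le]

lemma gt_of_le_of_gt (h : PseudolineSystem f) (hij : i < j) (hxy : x ≤ y) (hlt : f j y < f i y) :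
    f j x < f i x := by
  rcases hxy.eq_or_lt with rfl | hxy
  · exact hlt
  · by_contra! hle
    exact (h.lt_of_le hij hxy hle).not_gt hlt

lemma transitiveTriples (h : PseudolineSystem f) : TransitiveTriples (MiddleOnTop f) := by
  rintro x y z w hxy hyz hzw ⟨s, hxs, hzs⟩ ⟨t, hyt, hwt⟩
  have hst : s ≤ t := by
    by_contra! hts
    exact (h.lt_of_ge_of_lt hyz hts.le hyt).not_gt hzs
  exact ⟨⟨s, hxs, (h.gt_of_le_of_gt hzw hst hwt).trans hzs⟩,
    ⟨t, (h.lt_of_ge_of_lt hxy hst hxs).trans hyt, hwt⟩⟩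

lemma lt_of_tripleClique_left (h : PseudolineSystem f) {G : Set ι}
    (hG : TripleClique (MiddleOnTop f) G) (hk : k ∈ G) (hl : l ∈ G) (hj : j ∈ G) (hkl : k ≤ l)
    (hlj : l < j) (hlt : f l x < f j x) : f k x < f j x := by
  rcases hkl.eq_or_lt with rfl | hkl
  · exact hlt
  obtain ⟨y, hky, hjy⟩ := hG hk hl hj hkl hlj
  have hyx : y ≤ x := by
    by_contra! hxy
    exact (h.lt_of_ge_of_lt hlj hxy.le hlt).not_gt hjy
  exact (h.lt_of_ge_of_lt hkl hyx hky).trans hlt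

lemma lt_of_tripleClique_right (h : PseudolineSystem f) {G : Set ι}
    (hG : TripleClique (MiddleOnTop f) G) (hk : k ∈ G) (hl : l ∈ G) (hj : j ∈ G) (hlk : l ≤ k)
    (hjl : j < l) (hlt : f l x < f j x) : f k x < f j x := by
  rcases hlk.eq_or_lt with rfl | hlk
  · exact hlt
  obtain ⟨y, hjy, hky⟩ := hG hj hl hk hjl hlk
  have hxy : x ≤ y := by
    by_contra! hyx
    exact (h.lt_of_ge_of_lt hjl hyx.le hjy).not_gt hlt
  exact (h.gt_of_le_of_gt hlk hxy hky).trans hlt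

lemma onUpperEnvelope_of_tripleClique [Nonempty X] (h : PseudolineSystem f) {G : Finset ι}
    (hG : TripleClique (MiddleOnTop f) G) (hj : j ∈ G) : OnUpperEnvelope f G j := by
  simpa [OnUpperEnvelope] using exists_forall_ne_of_neighbours (D := fun k x ↦ f k x < f j x)
    univ_nonempty
    (fun x _ k hk l hl hkl hlj ↦ h.lt_of_tripleClique_left hG hk hl hj hkl hlj)
    (fun x _ k hk l hl hlk hjl ↦ h.lt_of_tripleClique_right hG hk hl hj hlk hjl)
    (fun k _ hkj ↦ by
      simpa using hkj.lt_or_gt.elim (fun hkj ↦ h.exists_lt hkj) fun hjk ↦ h.exists_gt hjk)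
    (fun k hk l hl hkj hjl ↦ by simpa [MiddleOnTop] using hG hk hj hl hkj hjl)

end PseudolineSystem

end Pseudoline

/-! ### Support functions -/

section SupportFunction

variable {E F : Type*} [NormedAddCommGroup E] [NormedSpace ℝ E] [NormedAddCommGroup F]
  [NormedSpace ℝ F] {A A' : Set E} {f w : E →L[ℝ] ℝ} {c : ℝ}

/-- The support function of a set, on the dual space. It is the maximum of the functional when the
set is compact and nonempty. -/
def supportFun (A : Set E) (f : E →L[ℝ] ℝ) : ℝ := sSup (f '' A)

lemma le_supportFun (hA : IsCompact A) {p : E} (hp : p ∈ A) : f p ≤ supportFun A f :=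
  le_csSup (hA.image f.continuous).bddAbove (mem_image_of_mem f hp)

lemma exists_supportFun_eq (hA : IsCompact A) (hne : A.Nonempty) (f : E →L[ℝ] ℝ) :
    ∃ p ∈ A, supportFun A f = f p :=
  hA.exists_sSup_image_eq hne f.continuous.continuousOn

lemma supportFun_lt_iff (hA : IsCompact A) (hne : A.Nonempty) :
    supportFun A f < c ↔ ∀ p ∈ A, f p < c := by
  refine ⟨fun h p hp ↦ (le_supportFun hA hp).trans_lt h, fun h ↦ ?_⟩
  obtain ⟨p, hp, hpf⟩ := exists_supportFun_eq hA hne f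
  exact hpf ▸ h p hp

lemma supportFun_le_iff (hA : IsCompact A) (hne : A.Nonempty) :
    supportFun A f ≤ c ↔ ∀ p ∈ A, f p ≤ c :=
  (csSup_le_iff (hA.image f.continuous).bddAbove (hne.image f)).trans forall_mem_image

lemma continuous_supportFun (hA : IsCompact A) : Continuous (supportFun A) :=
  hA.continuous_sSup (f := fun (f : E →L[ℝ] ℝ) p ↦ f p)
    (by simp only [Function.HasUncurry.uncurry, id]; fun_prop)

lemma supportFun_smul (hc : 0 ≤ c) : supportFun A (c • f) = c * supportFun A f := by
  rw [supportFun, supportFun, ← smul_eq_mul, ← Real.sSup_smul_of_nonneg hc, ← image_smul,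
    image_image]
  rfl

lemma supportFun_smul_lt_supportFun_smul_iff (hc : 0 < c) :
    supportFun A (c • f) < supportFun A' (c • f) ↔ supportFun A f < supportFun A' f := by
  rw [supportFun_smul hc.le, supportFun_smul hc.le, mul_lt_mul_iff_right₀ hc]

lemma supportFun_lt_supportFun (hA : IsCompact A) (hne : A.Nonempty) (hA' : IsCompact A')
    (hne' : A'.Nonempty) (hsep : ∀ p ∈ A, ∀ q ∈ A', w p < w q) :
    supportFun A w < supportFun A' w := by
  obtain ⟨q, hq⟩ := hne'
  exact ((supportFun_lt_iff hA hne).2 fun p hp ↦ hsep p hp q hq).trans_le (le_supportFun hA' hq)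

lemma supportFun_add_lt_supportFun_add (hA : IsCompact A) (hne : A.Nonempty) (hA' : IsCompact A')
    (hne' : A'.Nonempty) (hsep : ∀ p ∈ A, ∀ q ∈ A', w p < w q)
    (hf : supportFun A f ≤ supportFun A' f) : supportFun A (f + w) < supportFun A' (f + w) := by
  obtain ⟨q, hq, hqf⟩ := exists_supportFun_eq hA' hne' f
  exact ((supportFun_lt_iff hA hne).2 fun p hp ↦
    add_lt_add_of_le_of_lt ((le_supportFun hA hp).trans (hf.trans_eq hqf))
      (hsep p hp q hq)).trans_le (le_supportFun hA' hq)

lemma exists_supportFun_add_smul_lt (hA : IsCompact A) (hne : A.Nonempty) (hA' : IsCompact A')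
    (hne' : A'.Nonempty) (hsep : ∀ p ∈ A, ∀ q ∈ A', w p < w q) (f : E →L[ℝ] ℝ) :
    ∃ x : ℝ, supportFun A (f + x • w) < supportFun A' (f + x • w) := by
  have hev : ∀ᶠ d : ℝ in nhds 0, supportFun A (d • f + w) < supportFun A' (d • f + w) := by
    have hline : Continuous fun d : ℝ ↦ d • f + w := by fun_prop
    refine (isOpen_lt ((continuous_supportFun hA).comp hline)
      ((continuous_supportFun hA').comp hline)).mem_nhds ?_
    simpa using supportFun_lt_supportFun hA hne hA' hne' hsep
  obtain ⟨d, hd, hd0⟩ :=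
    ((hev.filter_mono nhdsWithin_le_nhds).and (self_mem_nhdsWithin (s := Ioi (0 : ℝ)))).exists
  have hd0 : 0 < d := hd0
  refine ⟨d⁻¹, (supportFun_smul_lt_supportFun_smul_iff hd0).1 ?_⟩
  rwa [smul_add, smul_inv_smul₀ hd0.ne']

lemma supportFun_image_sub (hA : IsCompact A) (hne : A.Nonempty) (L : E →L[ℝ] F) (x₀ : E)
    (f : F →L[ℝ] ℝ) :
    supportFun ((fun z ↦ L (z - x₀)) '' A) f = supportFun A (f.comp L) - f (L x₀) := by
  have hA' : IsCompact ((fun z ↦ L (z - x₀)) '' A) := hA.image (by fun_prop)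
  refine eq_of_forall_ge_iff fun c ↦ ?_
  rw [supportFun_le_iff hA' (hne.image _), sub_le_iff_le_add, supportFun_le_iff hA hne,
    forall_mem_image]
  simp

lemma exists_forall_lt_of_disjoint (hA : IsCompact A) (hcA : Convex ℝ A) (hA' : IsCompact A')
    (hcA' : Convex ℝ A') (hdisj : Disjoint A A') :
    ∃ w : E →L[ℝ] ℝ, ∀ p ∈ A, ∀ q ∈ A', w p < w q := by
  obtain ⟨w, u, v, hu, huv, hv⟩ :=
    geometric_hahn_banach_compact_closed hcA hA hcA' hA'.isClosed hdisj
  exact ⟨w, fun p hp q hq ↦ (hu p hp).trans (huv.trans (hv q hq))⟩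

lemma isPreconnected_setOf_supportFun_lt (hA : IsCompact A) (hcA : Convex ℝ A)
    (hne : A.Nonempty) (hA' : IsCompact A') (hcA' : Convex ℝ A') (hne' : A'.Nonempty)
    (hdisj : Disjoint A A') :
    IsPreconnected {f : E →L[ℝ] ℝ | supportFun A f < supportFun A' f} := by
  obtain ⟨w, hw⟩ := exists_forall_lt_of_disjoint hA hcA hA' hcA' hdisj
  have hstar : StarConvex ℝ w {f : E →L[ℝ] ℝ | supportFun A f < supportFun A' f} := by
    intro f (hf : supportFun A f < supportFun A' f) a b ha hb hab
    rcases ha.eq_or_lt with rfl | ha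
    · simpa [show b = 1 by linarith] using hf
    rw [mem_ofPred_eq, add_comm]
    refine supportFun_add_lt_supportFun_add hA hne hA' hne'
      (fun p hp q hq ↦ mul_lt_mul_of_pos_left (hw p hp q hq) ha) ?_
    rw [supportFun_smul hb, supportFun_smul hb]
    exact mul_le_mul_of_nonneg_left hf.le hb
  exact (hstar.isPathConnected
    (supportFun_lt_supportFun hA hne hA' hne' hw)).isConnected.isPreconnected

lemma exists_supportFun_lt_of_ray {ι : Type*} [Finite ι] (hA : IsCompact A) (hcA : Convex ℝ A)
    {v : E} (hv : v ≠ 0) {y : ℝ} (hy : y • v ∈ A) {z : ι → ℝ} (hz : ∀ i, y < z i → z i • v ∉ A) :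
    ∃ f : E →L[ℝ] ℝ, 0 < f v ∧ ∀ i, y < z i → supportFun A f < f (z i • v) := by
  rcases {i | y < z i}.eq_empty_or_nonempty with hempty | hne
  · obtain ⟨f, hf⟩ := SeparatingDual.exists_eq_one (R := ℝ) hv
    exact ⟨f, hf ▸ one_pos, fun i hi ↦ (hempty.subset hi).elim⟩
  obtain ⟨k, hk, hmin⟩ := exists_min_image _ z (toFinite _) hne
  obtain ⟨f, u, hfA, hfk⟩ := geometric_hahn_banach_closed_point hcA hA.isClosed (hz k hk)
  have hfv : 0 < f v := by
    have := (hfA _ hy).trans hfk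
    simp only [map_smul, smul_eq_mul] at this
    have hk : y < z k := hk
    nlinarith
  refine ⟨f, hfv, fun i hi ↦ ?_⟩
  calc supportFun A f < f (z k • v) :=
        (supportFun_lt_iff hA ⟨_, hy⟩).2 fun p hp ↦ (hfA p hp).trans hfk
    _ ≤ f (z i • v) := by
      rw [map_smul, map_smul]
      exact smul_le_smul_of_nonneg_right (hmin i hi) hfv.le

end SupportFunction

/-! ### Bodies met by the imaginary axis -/

section Axis

open Function Real

/-- The real-linear form on `ℂ` with coefficients `s` and `t`. -/
def coordForm (s t : ℝ) : ℂ →L[ℝ] ℝ := s • Complex.reCLM + t • Complex.imCLM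

@[simp]
lemma coordForm_apply (s t : ℝ) (z : ℂ) : coordForm s t z = s * z.re + t * z.im := rfl

lemma coordForm_one_I (f : ℂ →L[ℝ] ℝ) : coordForm (f 1) (f Complex.I) = f := by
  refine ContinuousLinearMap.ext fun z ↦ ?_
  conv_rhs => rw [show z = z.re • 1 + z.im • Complex.I by simp, map_add, map_smul, map_smul]
  simp [mul_comm]

lemma smul_coordForm (c s t : ℝ) : c • coordForm s t = coordForm (c * s) (c * t) := by
  ext z
  simp only [smul_apply, coordForm_apply, smul_eq_mul]
  ring

/-- The form `z ↦ re (conj z * exp (i θ))` measuring extent in the direction of angle `θ`. -/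
def angleForm (θ : ℝ) : ℂ →L[ℝ] ℝ := coordForm (cos θ) (sin θ)

lemma angleForm_periodic : Function.Periodic angleForm (2 * π) := fun θ ↦ by
  simp only [angleForm, cos_add_two_pi, sin_add_two_pi]

lemma angleForm_sub_pi (θ : ℝ) : angleForm (θ - π) = -angleForm θ := by
  ext z
  simp only [angleForm, coordForm_apply, neg_apply, cos_sub_pi, sin_sub_pi]
  ring

lemma continuous_angleForm : Continuous angleForm := by
  unfold angleForm coordForm
  fun_prop

lemma exists_eq_smul_angleForm {f : ℂ →L[ℝ] ℝ} (hf : f ≠ 0) :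
    ∃ r : ℝ, 0 < r ∧ ∃ θ ∈ Ioc (-π) π, f = r • angleForm θ := by
  let z : ℂ := ⟨f 1, f Complex.I⟩
  refine ⟨‖z‖, norm_pos_iff.2 fun hz ↦ hf ?_, z.arg, Complex.arg_mem_Ioc z, ?_⟩
  · rw [← coordForm_one_I f, show f 1 = 0 from congrArg Complex.re hz,
      show f Complex.I = 0 from congrArg Complex.im hz]
    simp [coordForm]
  · rw [angleForm, smul_coordForm, Complex.norm_mul_cos_arg, Complex.norm_mul_sin_arg,
      coordForm_one_I]

lemma exists_eq_smul_angleForm_of_pos {f : ℂ →L[ℝ] ℝ} (hf : 0 < f Complex.I) :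
    ∃ r : ℝ, 0 < r ∧ ∃ θ ∈ Ioo 0 π, f = r • angleForm θ := by
  obtain ⟨r, hr, θ, hθ, rfl⟩ := exists_eq_smul_angleForm (f := f) (by rintro rfl; simp at hf)
  have hsin : 0 < sin θ := by simpa [angleForm, hr] using hf
  refine ⟨r, hr, θ, ⟨?_, hθ.2.lt_of_ne ?_⟩, rfl⟩
  · by_contra! hθ0
    exact hsin.not_ge (sin_nonpos_of_nonpos_of_neg_pi_le hθ0 hθ.1.le)
  · rintro rfl
    simp at hsin

lemma exists_eq_smul_angleForm_of_neg {f : ℂ →L[ℝ] ℝ} (hf : f Complex.I < 0) :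
    ∃ r : ℝ, 0 < r ∧ ∃ θ ∈ Ioo (-π) 0, f = r • angleForm θ := by
  obtain ⟨r, hr, θ, hθ, hfθ⟩ := exists_eq_smul_angleForm_of_pos (f := -f) (by simpa using hf)
  refine ⟨r, hr, θ - π, ⟨by linarith [hθ.1], by linarith [hθ.2]⟩, ?_⟩
  rw [angleForm_sub_pi, smul_neg, ← hfθ, neg_neg]

lemma exists_angleForm_eq_add {θ x w : ℝ}
    (hx : (θ < x ∧ x ≤ w ∧ w < θ + π) ∨ (w ≤ x ∧ x < θ ∧ θ < w + π)) :
    ∃ l : ℝ, 0 ≤ l ∧ ∃ m : ℝ, 0 < m ∧ angleForm x = l • angleForm θ + m • angleForm w := by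
  have hsin : sin (w - θ) ≠ 0 ∧ 0 ≤ sin (w - x) / sin (w - θ) ∧ 0 < sin (x - θ) / sin (w - θ) := by
    rcases hx with ⟨h1, h2, h3⟩ | ⟨h1, h2, h3⟩
    · have hwθ : 0 < sin (w - θ) := sin_pos_of_pos_of_lt_pi (by linarith) (by linarith)
      have hxθ : 0 < sin (x - θ) := sin_pos_of_pos_of_lt_pi (by linarith) (by linarith)
      have hwx : 0 ≤ sin (w - x) := sin_nonneg_of_nonneg_of_le_pi (by linarith) (by linarith)
      exact ⟨hwθ.ne', by positivity, by positivity⟩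
    · have hwθ : sin (w - θ) < 0 := sin_neg_of_neg_of_neg_pi_lt (by linarith) (by linarith)
      have hxθ : sin (x - θ) < 0 := sin_neg_of_neg_of_neg_pi_lt (by linarith) (by linarith)
      have hwx : sin (w - x) ≤ 0 := sin_nonpos_of_nonpos_of_neg_pi_le (by linarith) (by linarith)
      exact ⟨hwθ.ne, div_nonneg_of_nonpos hwx hwθ.le, div_pos_of_neg_of_neg hxθ hwθ⟩
  obtain ⟨h0, hl, hm⟩ := hsin
  refine ⟨_, hl, _, hm, ?_⟩
  ext z
  simp only [angleForm, coordForm_apply, add_apply, smul_apply, smul_eq_mul]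
  field_simp
  simp only [sin_sub]
  ring

variable {A A' : Set ℂ}

lemma supportFun_angleForm_lt (hA : IsCompact A) (hne : A.Nonempty) (hA' : IsCompact A')
    (hne' : A'.Nonempty) {w : ℝ} (hsep : ∀ p ∈ A, ∀ q ∈ A', angleForm w p < angleForm w q)
    {θ x : ℝ} (hθ : supportFun A (angleForm θ) ≤ supportFun A' (angleForm θ))
    (hx : (θ < x ∧ x ≤ w ∧ w < θ + π) ∨ (w ≤ x ∧ x < θ ∧ θ < w + π)) :
    supportFun A (angleForm x) < supportFun A' (angleForm x) := by
  obtain ⟨l, hl, m, hm, hlm⟩ := exists_angleForm_eq_add hx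
  rw [hlm]
  refine supportFun_add_lt_supportFun_add hA hne hA' hne'
    (fun p hp q hq ↦ mul_lt_mul_of_pos_left (hsep p hp q hq) hm) ?_
  rw [supportFun_smul hl, supportFun_smul hl]
  exact mul_le_mul_of_nonneg_left hθ hl

lemma exists_crossesAt (hA : IsCompact A) (hne : A.Nonempty) (hA' : IsCompact A')
    (hne' : A'.Nonempty) {w : ℝ} (hsep : ∀ p ∈ A, ∀ q ∈ A', angleForm w p < angleForm w q) :
    ∃ a ∈ Ioo (w - 2 * π) (w - π), ∃ b ∈ Ioo (w - π) w,
      CrossesAt (fun θ ↦ supportFun A (angleForm θ)) (fun θ ↦ supportFun A' (angleForm θ)) a b := by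
  have hsep' : ∀ p ∈ A', ∀ q ∈ A, angleForm (w - π) p < angleForm (w - π) q := fun p hp q hq ↦ by
    simpa [angleForm_sub_pi] using hsep q hq p hp
  let d : ℝ → ℝ := fun θ ↦ supportFun A (angleForm θ) - supportFun A' (angleForm θ)
  have hd : Continuous d := ((continuous_supportFun hA).comp continuous_angleForm).sub
    ((continuous_supportFun hA').comp continuous_angleForm)
  have hdper (θ : ℝ) : d (θ + 2 * π) = d θ := by simp only [d, angleForm_periodic θ]
  have hdw : d w < 0 := sub_neg.2 (supportFun_lt_supportFun hA hne hA' hne' hsep)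
  have hdwpi : 0 < d (w - π) := sub_pos.2 (supportFun_lt_supportFun hA' hne' hA hne hsep')
  have hdw2pi : d (w - 2 * π) < 0 := by rwa [← hdper, sub_add_cancel]
  obtain ⟨b, ⟨hb1, hb2⟩, hb⟩ := intermediate_value_Ioo' (by linarith [pi_pos] : w - π ≤ w)
    hd.continuousOn (show (0 : ℝ) ∈ Ioo _ _ from ⟨hdw, hdwpi⟩)
  obtain ⟨a, ⟨ha1, ha2⟩, ha⟩ := intermediate_value_Ioo (by linarith [pi_pos] : w - 2 * π ≤ w - π)
    hd.continuousOn (show (0 : ℝ) ∈ Ioo _ _ from ⟨hdw2pi, hdwpi⟩)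
  have gt_of {x θ : ℝ} := supportFun_angleForm_lt hA' hne' hA hne hsep' (θ := θ) (x := x)
  have lt_of {x θ : ℝ} := supportFun_angleForm_lt hA hne hA' hne' hsep (θ := θ) (x := x)
  refine ⟨a, ⟨ha1, ha2⟩, b, ⟨hb1, hb2⟩, sub_eq_zero.1 ha, sub_eq_zero.1 hb, ?_, ?_⟩
  · rintro θ ⟨haθ, hθb⟩
    rcases le_total θ (w - π) with h | h
    · exact gt_of (sub_eq_zero.1 ha).ge (.inl ⟨haθ, h, by linarith⟩)
    · exact gt_of (sub_eq_zero.1 hb).ge (.inr ⟨h, hθb, by linarith⟩)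
  · rintro θ ⟨hbθ, hθa⟩
    rcases le_total θ w with h | h
    · exact lt_of (sub_eq_zero.1 hb).le (.inl ⟨hbθ, h, by linarith⟩)
    · exact lt_of (sub_eq_zero.1 ((hdper a).trans ha)).le (.inr ⟨h, hθa, by linarith⟩)

lemma exists_crossesAt_of_lt {A A' : ConvexBody ℂ} (hdisj : Disjoint (A : Set ℂ) A') {y y' : ℝ}
    (hy : y • Complex.I ∈ A) (hy' : y' • Complex.I ∈ A') (hlt : y < y') :
    ∃ a ∈ Ioo (-2 * π) 0, ∃ b ∈ Ioo (-π) π,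
      CrossesAt (fun θ ↦ supportFun A (angleForm θ)) (fun θ ↦ supportFun A' (angleForm θ)) a b := by
  obtain ⟨w, hw⟩ := exists_forall_lt_of_disjoint A.isCompact A.convex A'.isCompact A'.convex hdisj
  have hwI : 0 < w Complex.I := by
    have := hw _ hy _ hy'
    simp only [map_smul, smul_eq_mul] at this
    nlinarith
  obtain ⟨r, hr, θ, ⟨hθ0, hθπ⟩, rfl⟩ := exists_eq_smul_angleForm_of_pos hwI
  obtain ⟨a, ⟨ha1, ha2⟩, b, ⟨hb1, hb2⟩, hab⟩ := exists_crossesAt A.isCompact A.nonempty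
    A'.isCompact A'.nonempty fun p hp q hq ↦ lt_of_mul_lt_mul_left (hw p hp q hq) hr.le
  exact ⟨a, ⟨by linarith, by linarith⟩, b, ⟨by linarith, by linarith⟩, hab⟩

lemma tripleEnvelope_angleForm {ι : Type*} {A : ι → Set ℂ}
    (h : TripleEnvelope fun i ↦ supportFun (A i)) :
    TripleEnvelope fun i θ ↦ supportFun (A i) (angleForm θ) := by
  intro i j k hij hik hjk
  obtain ⟨f, hfj, hfk⟩ := h hij hik hjk
  have hf : f ≠ 0 := by
    rintro rfl
    have hzero (l : ι) : supportFun (A l) 0 = 0 := by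
      simpa using supportFun_smul (A := A l) (f := 0) le_rfl
    simp [hzero] at hfj
  obtain ⟨r, hr, θ, -, rfl⟩ := exists_eq_smul_angleForm hf
  exact ⟨θ, (supportFun_smul_lt_supportFun_smul_iff hr).1 hfj,
    (supportFun_smul_lt_supportFun_smul_iff hr).1 hfk⟩

section Transversal

variable {ι : Type*} {B : ι → ConvexBody ℂ} {y : ι → ℝ}

lemma exists_angleForm_lt_of_above [Finite ι] (hy : ∀ i, y i • Complex.I ∈ B i)
    (hdisj : Pairwise (Disjoint on fun i ↦ (B i : Set ℂ))) (i : ι) :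
    ∃ θ ∈ Ioo 0 π, ∀ j, y i < y j →
      supportFun (B i) (angleForm θ) < supportFun (B j) (angleForm θ) := by
  obtain ⟨f, hfI, hf⟩ := exists_supportFun_lt_of_ray (z := y) (B i).isCompact (B i).convex
    Complex.I_ne_zero (hy i) fun j hij ↦
      disjoint_right.1 (hdisj (ne_of_apply_ne y hij.ne)) (hy j)
  obtain ⟨r, hr, θ, hθ, rfl⟩ := exists_eq_smul_angleForm_of_pos hfI
  exact ⟨θ, hθ, fun j hij ↦ (supportFun_smul_lt_supportFun_smul_iff hr).1
    ((hf j hij).trans_le (le_supportFun (B j).isCompact (hy j)))⟩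

lemma exists_angleForm_lt_of_below [Finite ι] (hy : ∀ i, y i • Complex.I ∈ B i)
    (hdisj : Pairwise (Disjoint on fun i ↦ (B i : Set ℂ))) (j : ι) :
    ∃ θ ∈ Ioo (-π) 0, ∀ i, y i < y j →
      supportFun (B j) (angleForm θ) < supportFun (B i) (angleForm θ) := by
  obtain ⟨f, hfI, hf⟩ := exists_supportFun_lt_of_ray (v := -Complex.I) (y := -y j)
    (z := fun i ↦ -y i) (B j).isCompact (B j).convex (neg_ne_zero.2 Complex.I_ne_zero)
    (by simpa using hy j) fun i hij ↦ by
      simpa using disjoint_right.1 (hdisj (ne_of_apply_ne y (neg_lt_neg_iff.1 hij).ne')) (hy i)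
  obtain ⟨r, hr, θ, hθ, rfl⟩ := exists_eq_smul_angleForm_of_neg (neg_pos.1 (map_neg f _ ▸ hfI))
  refine ⟨θ, hθ, fun i hij ↦ (supportFun_smul_lt_supportFun_smul_iff hr).1
    ((hf i (neg_lt_neg hij)).trans_le (le_supportFun (B i).isCompact ?_))⟩
  simpa using hy i

lemma exists_crossingSystem [Finite ι] [LinearOrder ι] (hmono : StrictMono y)
    (hy : ∀ i, y i • Complex.I ∈ B i) (hdisj : Pairwise (Disjoint on fun i ↦ (B i : Set ℂ)))
    (htriple : TripleEnvelope fun i ↦ supportFun (B i : Set ℂ)) :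
    ∃ a b m n, CrossingSystem (fun i θ ↦ supportFun (B i) (angleForm θ)) a b m n := by
  have hcross (i j : ι) : ∃ a b, i < j → a ∈ Ioo (-2 * π) 0 ∧ b ∈ Ioo (-π) π ∧
      CrossesAt (fun θ ↦ supportFun (B i) (angleForm θ))
        (fun θ ↦ supportFun (B j) (angleForm θ)) a b := by
    by_cases hij : i < j
    · obtain ⟨a, ha, b, hb, hab⟩ :=
        exists_crossesAt_of_lt (hdisj hij.ne) (hy i) (hy j) (hmono hij)
      exact ⟨a, b, fun _ ↦ ⟨ha, hb, hab⟩⟩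
    · exact ⟨0, 0, fun h ↦ (hij h).elim⟩
  choose a b hab using hcross
  choose n hn hlt_n using exists_angleForm_lt_of_above hy hdisj
  choose m hm hlt_m using exists_angleForm_lt_of_below hy hdisj
  exact ⟨a, b, m, n,
    { periodic i θ := by simp only [angleForm_periodic θ]
      crosses i j hij := (hab i j hij).2.2
      a_mem i j hij := (hab i j hij).1
      b_mem i j hij := (hab i j hij).2.1
      m_mem := hm
      n_mem := hn
      lt_at_m i j hij := hlt_m j i (hmono hij)
      lt_at_n i j hij := hlt_n i j (hmono hij)
      tripleEnvelope := tripleEnvelope_angleForm htriple }⟩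

theorem hasEnvelope_of_meets_axis [Fintype ι] (hmeet : ∀ i, ∃ z ∈ B i, z.re = 0)
    (hdisj : Pairwise (Disjoint on fun i ↦ (B i : Set ℂ)))
    (htriple : TripleEnvelope fun i ↦ supportFun (B i : Set ℂ)) (p : ℕ)
    (hcard : (p + p).choose p < Fintype.card ι) :
    HasEnvelope (fun i ↦ supportFun (B i : Set ℂ)) (p + 2) := by
  have haxis (i : ι) : ∃ y : ℝ, y • Complex.I ∈ B i := by
    obtain ⟨z, hz, hre⟩ := hmeet i
    exact ⟨z.im, by rwa [show z.im • Complex.I = z from Complex.ext (by simp [hre]) (by simp)]⟩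
  choose y hy using haxis
  have hinj : Injective y := fun i j hij ↦ by
    by_contra hne
    exact disjoint_left.1 (hdisj hne) (hy i) (hij ▸ hy j)
  let _ : LinearOrder ι := LinearOrder.lift' y hinj
  have hmono : StrictMono y := fun _ _ h ↦ h
  obtain ⟨a, b, m, n, h⟩ := exists_crossingSystem hmono hy hdisj htriple
  exact (h.hasEnvelope p hcard).of_forall_exists fun θ ↦ ⟨angleForm θ, fun _ _ ↦ id⟩

end Transversal

end Axis

/-! ### Bodies with disjoint ranges of slopes -/

section Slope

/-- The projective map `z ↦ (re z + i) / im z` of the upper half-plane, which sends lines through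
the origin to vertical lines. -/
def slopeMap (z : ℂ) : ℂ := ⟨z.re / z.im, 1 / z.im⟩

/-- The support function of the image of `A` under `slopeMap`, along the line of forms whose second
coefficient is `e`. Only the signs `e = 1` and `e = -1` matter: they describe the parts of the
boundary of `A` facing the origin and facing away from it. -/
def slopeProfile (A : Set ℂ) (e x : ℝ) : ℝ := supportFun (slopeMap '' A) (coordForm x e)

variable {A A' : Set ℂ} {r s t e : ℝ}

lemma continuousOn_re_div_im (hpos : ∀ z ∈ A, 0 < z.im) :
    ContinuousOn (fun z : ℂ ↦ z.re / z.im) A :=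
  Complex.continuous_re.continuousOn.div Complex.continuous_im.continuousOn
    fun z hz ↦ (hpos z hz).ne'

lemma isCompact_image_slopeMap (hA : IsCompact A) (hpos : ∀ z ∈ A, 0 < z.im) :
    IsCompact (slopeMap '' A) := by
  have him : ContinuousOn (fun z : ℂ ↦ 1 / z.im) A :=
    continuousOn_const.div Complex.continuous_im.continuousOn fun z hz ↦ (hpos z hz).ne'
  exact hA.image_of_continuousOn (Complex.equivRealProdCLM.symm.continuous.comp_continuousOn
    ((continuousOn_re_div_im hpos).prodMk him))

lemma coordForm_slopeMap_add {z : ℂ} (hz : z.im ≠ 0) :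
    coordForm s (r * e) (slopeMap z) + t = (coordForm s t z + r * e) / z.im := by
  simp only [coordForm_apply, slopeMap]
  field_simp
  ring

lemma mul_slopeProfile (hr : 0 < r) :
    r * slopeProfile A e (s / r) = supportFun (slopeMap '' A) (coordForm s (r * e)) := by
  rw [slopeProfile, ← supportFun_smul hr.le, smul_coordForm, mul_div_cancel₀ _ hr.ne']

lemma mul_slopeProfile_lt_iff (hA : IsCompact A) (hne : A.Nonempty) (hpos : ∀ z ∈ A, 0 < z.im)
    (hr : 0 < r) :
    r * slopeProfile A e (s / r) < -t ↔ supportFun A (coordForm s t) < -(r * e) := by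
  rw [mul_slopeProfile hr, supportFun_lt_iff (isCompact_image_slopeMap hA hpos) (hne.image _),
    supportFun_lt_iff hA hne, forall_mem_image]
  refine forall₂_congr fun z hz ↦ ?_
  rw [lt_neg_iff_add_neg, coordForm_slopeMap_add (hpos z hz).ne',
    div_lt_iff₀ (hpos z hz), zero_mul, lt_neg_iff_add_neg]

lemma mul_slopeProfile_le_iff (hA : IsCompact A) (hne : A.Nonempty) (hpos : ∀ z ∈ A, 0 < z.im)
    (hr : 0 < r) :
    r * slopeProfile A e (s / r) ≤ -t ↔ supportFun A (coordForm s t) ≤ -(r * e) := by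
  rw [mul_slopeProfile hr, supportFun_le_iff (isCompact_image_slopeMap hA hpos) (hne.image _),
    supportFun_le_iff hA hne, forall_mem_image]
  refine forall₂_congr fun z hz ↦ ?_
  rw [le_neg_iff_add_nonpos_right, coordForm_slopeMap_add (hpos z hz).ne',
    div_le_iff₀ (hpos z hz), zero_mul, le_neg_iff_add_nonpos_right]

lemma slopeProfile_lt_slopeProfile (hA : IsCompact A) (hne : A.Nonempty)
    (hpos : ∀ z ∈ A, 0 < z.im) (hA' : IsCompact A') (hne' : A'.Nonempty)
    (hpos' : ∀ z ∈ A', 0 < z.im) (hr : 0 < r) (h : supportFun A (coordForm s t) < -(r * e))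
    (h' : -(r * e) ≤ supportFun A' (coordForm s t)) :
    slopeProfile A e (s / r) < slopeProfile A' e (s / r) := by
  refine lt_of_mul_lt_mul_left ?_ hr.le
  calc r * slopeProfile A e (s / r) < -t := (mul_slopeProfile_lt_iff hA hne hpos hr).2 h
    _ ≤ r * slopeProfile A' e (s / r) :=
      not_lt.1 fun hlt ↦ ((mul_slopeProfile_lt_iff hA' hne' hpos' hr).1 hlt).not_ge h'

lemma supportFun_lt_iff_slopeProfile_lt (hA : IsCompact A) (hne : A.Nonempty)
    (hpos : ∀ z ∈ A, 0 < z.im) (hA' : IsCompact A') (hne' : A'.Nonempty)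
    (hpos' : ∀ z ∈ A', 0 < z.im) (hr : 0 < r) (h : supportFun A' (coordForm s t) = -(r * e)) :
    supportFun A (coordForm s t) < supportFun A' (coordForm s t) ↔
      slopeProfile A e (s / r) < slopeProfile A' e (s / r) := by
  refine ⟨fun hlt ↦ slopeProfile_lt_slopeProfile hA hne hpos hA' hne' hpos' hr (h ▸ hlt) h.ge,
    fun hlt ↦ ?_⟩
  rw [h, ← mul_slopeProfile_lt_iff hA hne hpos hr]
  exact (mul_lt_mul_of_pos_left hlt hr).trans_le
    ((mul_slopeProfile_le_iff hA' hne' hpos' hr).2 h.le)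

lemma supportFun_coordForm_neg_slopeProfile (hA : IsCompact A) (hne : A.Nonempty)
    (hpos : ∀ z ∈ A, 0 < z.im) (x : ℝ) :
    supportFun A (coordForm x (-slopeProfile A 1 x)) = -1 := by
  have hle := mul_slopeProfile_le_iff hA hne hpos one_pos (e := 1) (s := x)
    (t := -slopeProfile A 1 x)
  have hlt := mul_slopeProfile_lt_iff hA hne hpos one_pos (e := 1) (s := x)
    (t := -slopeProfile A 1 x)
  simp only [one_mul, mul_one, div_one, neg_neg, le_refl, true_iff, lt_self_iff_false,
    false_iff, not_lt] at hle hlt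
  exact hle.antisymm hlt

/-- A body `B none` containing the origin, together with bodies in the open upper half-plane that
are disjoint from it and whose points have strictly increasing slopes `re z / im z`. -/
structure SlopeSeparated {κ : Type*} [LinearOrder κ] (B : Option κ → ConvexBody ℂ) : Prop where
  zero_mem : 0 ∈ B none
  im_pos : ∀ k, ∀ z ∈ B (some k), 0 < z.im
  slope_lt : ∀ ⦃k l⦄, k < l → ∀ z ∈ B (some k), ∀ w ∈ B (some l), z.re / z.im < w.re / w.im
  disjoint : ∀ k, Disjoint (B none : Set ℂ) (B (some k))
  tripleEnvelope : TripleEnvelope fun i ↦ supportFun (B i : Set ℂ)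

namespace SlopeSeparated

variable {κ : Type*} [LinearOrder κ] {B : Option κ → ConvexBody ℂ} {j k l : κ} {f : ℂ →L[ℝ] ℝ}

lemma pseudolineSystem (h : SlopeSeparated B) (e : ℝ) :
    PseudolineSystem fun k ↦ slopeProfile (B (some k)) e := by
  have hcomp (k : κ) := isCompact_image_slopeMap (B (some k)).isCompact (h.im_pos k)
  have hne (k : κ) := (B (some k)).nonempty.image slopeMap
  have hline (x y : ℝ) : coordForm x e + (y - x) • coordForm 1 0 = coordForm y e := by
    ext z
    simp only [add_apply, smul_apply, coordForm_apply, smul_eq_mul]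
    ring
  have hline₀ (x : ℝ) : coordForm 0 e + x • coordForm 1 0 = coordForm x e := by
    simpa using hline 0 x
  have hsep {k l : κ} (hkl : k < l) : ∀ p ∈ slopeMap '' B (some k), ∀ q ∈ slopeMap '' B (some l),
      coordForm 1 0 p < coordForm 1 0 q := by
    rintro _ ⟨z, hz, rfl⟩ _ ⟨w, hw, rfl⟩
    simpa [slopeMap] using h.slope_lt hkl z hz w hw
  refine ⟨fun k l hkl x y hxy hle ↦ ?_, fun k l hkl ↦ ?_, fun k l hkl ↦ ?_⟩
  · rw [slopeProfile, slopeProfile, ← hline x y]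
    exact supportFun_add_lt_supportFun_add (hcomp k) (hne k) (hcomp l) (hne l)
      (fun p hp q hq ↦ mul_lt_mul_of_pos_left (hsep hkl p hp q hq) (sub_pos.2 hxy)) hle
  · obtain ⟨x, hx⟩ := exists_supportFun_add_smul_lt (w := -coordForm 1 0) (hcomp l) (hne l)
      (hcomp k) (hne k) (fun p hp q hq ↦ neg_lt_neg (hsep hkl q hq p hp)) (coordForm 0 e)
    rw [smul_neg, ← neg_smul, hline₀] at hx
    exact ⟨-x, hx⟩
  · obtain ⟨x, hx⟩ := exists_supportFun_add_smul_lt (hcomp k) (hne k) (hcomp l) (hne l)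
      (hsep hkl) (coordForm 0 e)
    rw [hline₀] at hx
    exact ⟨x, hx⟩

lemma slopeProfile_lt (h : SlopeSeparated B) {r e : ℝ} (hr : 0 < r)
    (hk : supportFun (B (some k)) f < -(r * e)) (hj : -(r * e) < supportFun (B (some j)) f) :
    slopeProfile (B (some k)) e (f 1 / r) < slopeProfile (B (some j)) e (f 1 / r) := by
  rw [← coordForm_one_I f] at hk hj
  exact slopeProfile_lt_slopeProfile (B (some k)).isCompact (B (some k)).nonempty (h.im_pos k)
    (B (some j)).isCompact (B (some j)).nonempty (h.im_pos j) hr hk hj.le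

lemma middleOnTop_or_middleOnTop (h : SlopeSeparated B) (hkj : k < j) (hjl : j < l) :
    MiddleOnTop (fun k ↦ slopeProfile (B (some k)) 1) k j l ∨
      MiddleOnTop (fun k ↦ slopeProfile (B (some k)) (-1)) k j l := by
  obtain ⟨f, hkf, hlf⟩ := h.tripleEnvelope (i := some j) (j := some k) (k := some l)
    (by simpa using hkj.ne') (by simpa using hjl.ne) (by simpa using (hkj.trans hjl).ne)
  obtain ⟨c, ⟨hc, hcj⟩, hc0 : c ≠ 0⟩ :=
    ((Ioo_infinite (max_lt hkf hlf)).sdiff (finite_singleton 0)).nonempty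
  obtain ⟨hck, hcl⟩ := max_lt_iff.1 hc
  rcases hc0.lt_or_gt with hneg | hpos
  · have hr : c = -(-c * 1) := by ring
    rw [hr] at hck hcl hcj
    exact .inl ⟨_, h.slopeProfile_lt (neg_pos.2 hneg) hck hcj,
      h.slopeProfile_lt (neg_pos.2 hneg) hcl hcj⟩
  · have hr : c = -(c * -1) := by ring
    rw [hr] at hck hcl hcj
    exact .inr ⟨_, h.slopeProfile_lt hpos hck hcj, h.slopeProfile_lt hpos hcl hcj⟩

lemma onUpperEnvelope_of_near (h : SlopeSeparated B) {G : Finset κ}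
    (htop : OnUpperEnvelope (fun k ↦ slopeProfile (B (some k)) 1) G j) :
    OnUpperEnvelope (fun i ↦ supportFun (B i : Set ℂ)) (G.map .some) (some j) := by
  obtain ⟨x, hx⟩ := htop
  refine ⟨coordForm x (-slopeProfile (B (some j)) 1 x), ?_⟩
  simp only [Finset.forall_mem_map]
  intro k hk hkj
  refine (supportFun_lt_iff_slopeProfile_lt (B (some k)).isCompact (B (some k)).nonempty
    (h.im_pos k) (B (some j)).isCompact (B (some j)).nonempty (h.im_pos j) one_pos (e := 1) ?_).2 ?_
  · rw [one_mul]
    exact supportFun_coordForm_neg_slopeProfile (B (some j)).isCompact (B (some j)).nonempty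
      (h.im_pos j) x
  · rw [div_one]
    exact hx k hk fun hkj' ↦ hkj (congrArg some hkj')

lemma supportFun_lt_iff_far (h : SlopeSeparated B)
    (hf : supportFun (B none) f < supportFun (B (some j)) f) :
    supportFun (B (some k)) f < supportFun (B (some j)) f ↔
      slopeProfile (B (some k)) (-1) (f 1 / supportFun (B (some j)) f) <
        slopeProfile (B (some j)) (-1) (f 1 / supportFun (B (some j)) f) := by
  have hpos : 0 < supportFun (B (some j)) f :=
    lt_of_le_of_lt (by simpa using le_supportFun (f := f) (B none).isCompact h.zero_mem) hf
  have := supportFun_lt_iff_slopeProfile_lt (B (some k)).isCompact (B (some k)).nonempty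
    (h.im_pos k) (B (some j)).isCompact (B (some j)).nonempty (h.im_pos j) hpos
    (s := f 1) (t := f Complex.I) (e := -1) (by rw [coordForm_one_I]; ring)
  rwa [coordForm_one_I] at this

lemma onUpperEnvelope_none (h : SlopeSeparated B) (G : Finset κ) :
    OnUpperEnvelope (fun i ↦ supportFun (B i : Set ℂ)) G.insertNone none := by
  refine ⟨coordForm 0 (-1), ?_⟩
  rintro (- | k) - hk
  · exact (hk rfl).elim
  refine ((supportFun_lt_iff (B (some k)).isCompact (B (some k)).nonempty).2 fun z hz ↦ ?_).trans_le
    (by simpa using le_supportFun (f := coordForm 0 (-1)) (B none).isCompact h.zero_mem)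
  simpa using h.im_pos k z hz

lemma exists_supportFun_lt_of_neighbours (h : SlopeSeparated B) (hkj : k < j) (hjl : j < l)
    (htop : MiddleOnTop (fun k ↦ slopeProfile (B (some k)) (-1)) k j l) :
    ∃ f : ℂ →L[ℝ] ℝ, supportFun (B none) f < supportFun (B (some j)) f ∧
      supportFun (B (some k)) f < supportFun (B (some j)) f ∧
      supportFun (B (some l)) f < supportFun (B (some j)) f := by
  have hopen (i : Option κ) :
      IsOpen {f : ℂ →L[ℝ] ℝ | supportFun (B i) f < supportFun (B (some j)) f} :=
    isOpen_lt (continuous_supportFun (B i).isCompact) (continuous_supportFun (B _).isCompact)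
  have hnone : IsPreconnected {f : ℂ →L[ℝ] ℝ | supportFun (B none) f < supportFun (B (some j)) f} :=
    isPreconnected_setOf_supportFun_lt (B _).isCompact (B _).convex (B _).nonempty
      (B _).isCompact (B _).convex (B _).nonempty (h.disjoint j)
  obtain ⟨x, hkx, hlx⟩ := htop
  refine hnone _ _ (hopen (some k)) (hopen (some l)) (fun f hf ↦ ?_) ?_ ?_
  · rcases le_total x (f 1 / supportFun (B (some j)) f) with hx | hx
    · exact .inl ((h.supportFun_lt_iff_far hf).2
        ((h.pseudolineSystem (-1)).lt_of_ge_of_lt hkj hx hkx))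
    · exact .inr ((h.supportFun_lt_iff_far hf).2
        ((h.pseudolineSystem (-1)).gt_of_le_of_gt hjl hx hlx))
  · exact h.tripleEnvelope (by simp) (by simpa using hkj.ne') (by simp)
  · exact h.tripleEnvelope (by simp) (by simpa using hjl.ne) (by simp)

lemma onUpperEnvelope_of_far (h : SlopeSeparated B) {G : Finset κ} (hj : j ∈ G)
    (hG : TripleClique (MiddleOnTop fun k ↦ slopeProfile (B (some k)) (-1)) G) :
    OnUpperEnvelope (fun i ↦ supportFun (B i : Set ℂ)) G.insertNone (some j) := by
  have hfar := h.pseudolineSystem (-1)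
  obtain ⟨w, hw⟩ := exists_forall_lt_of_disjoint (B _).isCompact (B _).convex (B _).isCompact
    (B _).convex (h.disjoint j)
  obtain ⟨f, hfnone, hf⟩ := exists_forall_ne_of_neighbours (G := G) (j := j)
    (D := fun k (f : ℂ →L[ℝ] ℝ) ↦ supportFun (B (some k)) f < supportFun (B (some j)) f)
    (U := {f : ℂ →L[ℝ] ℝ | supportFun (B none) f < supportFun (B (some j)) f})
    ⟨w, supportFun_lt_supportFun (B _).isCompact (B _).nonempty (B _).isCompact (B _).nonempty hw⟩
    (fun f hf k hk l hl hkl hlj hlt ↦ (h.supportFun_lt_iff_far hf).2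
      (hfar.lt_of_tripleClique_left hG hk hl hj hkl hlj ((h.supportFun_lt_iff_far hf).1 hlt)))
    (fun f hf k hk l hl hlk hjl hlt ↦ (h.supportFun_lt_iff_far hf).2
      (hfar.lt_of_tripleClique_right hG hk hl hj hlk hjl ((h.supportFun_lt_iff_far hf).1 hlt)))
    (fun k _ hkj ↦ h.tripleEnvelope (by simp) (by simpa using hkj.symm) (by simp))
    (fun k hk l hl hkj hjl ↦ h.exists_supportFun_lt_of_neighbours hkj hjl (hG hk hj hl hkj hjl))
  refine ⟨f, ?_⟩
  rintro (- | k) hk hkj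
  · exact hfnone
  · exact hf k (Finset.some_mem_insertNone.1 hk) fun hkj' ↦ hkj (congrArg some hkj')

theorem hasEnvelope [Fintype κ] (h : SlopeSeparated B) (m : ℕ)
    (hcard : (m + 1 + m).choose (m + 1) < Fintype.card κ) :
    HasEnvelope (fun i ↦ supportFun (B i : Set ℂ)) (m + 3) := by
  rcases exists_tripleClique_or_tripleClique (h.pseudolineSystem 1).transitiveTriples
      (h.pseudolineSystem (-1)).transitiveTriples (fun _ _ _ ↦ h.middleOnTop_or_middleOnTop)
      (m + 1) m hcard with
    ⟨G, -, hG_card, hG⟩ | ⟨G, -, hG_card, hG⟩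
  · refine ⟨G.map .some, by simpa using hG_card, fun i hi ↦ ?_⟩
    obtain ⟨j, hj, rfl⟩ := Finset.mem_map.1 hi
    exact h.onUpperEnvelope_of_near ((h.pseudolineSystem 1).onUpperEnvelope_of_tripleClique hG hj)
  · refine ⟨G.insertNone, by simpa using hG_card, ?_⟩
    rintro (- | j) hj
    · exact h.onUpperEnvelope_none G
    · exact h.onUpperEnvelope_of_far (Finset.some_mem_insertNone.1 hj) hG

end SlopeSeparated

end Slope

/-! ### Reduction to the two normal forms -/

section Reduction

open Function

variable {E F : Type*} [NormedAddCommGroup E] [NormedSpace ℝ E] [NormedAddCommGroup F]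
  [NormedSpace ℝ F] {ι κ : Type*}

/-- Pairwise disjoint convex bodies in general position, the latter being expressed by support
functions. -/
structure DisjointGeneric (B : ι → ConvexBody E) : Prop where
  disjoint : Pairwise (Disjoint on fun i ↦ (B i : Set E))
  tripleEnvelope : TripleEnvelope fun i ↦ supportFun (B i : Set E)

lemma DisjointGeneric.comp_injective {B : ι → ConvexBody E} (hB : DisjointGeneric B) {e : κ → ι}
    (he : e.Injective) : DisjointGeneric (B ∘ e) :=
  ⟨hB.disjoint.comp_of_injective he, hB.tripleEnvelope.comp_injective he⟩

/-- The image of a convex body under the affine isomorphism `z ↦ e (z - x₀)`, used to move a family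
of bodies into a normal form. -/
def imageSub (e : E ≃L[ℝ] F) (x₀ : E) (A : ConvexBody E) : ConvexBody F where
  carrier := (fun z ↦ e (z - x₀)) '' A
  convex' := by
    rw [← image_image e fun z ↦ z - x₀]
    simp only [sub_eq_neg_add]
    exact (A.convex.translate _).linear_image e.toLinearMap
  isCompact' := A.isCompact.image (by fun_prop)
  nonempty' := A.nonempty.image _

variable {e : E ≃L[ℝ] F} {x₀ : E} {A A' : ConvexBody E} {B : ι → ConvexBody E}

lemma mem_imageSub {w : F} : w ∈ imageSub e x₀ A ↔ ∃ z ∈ A, e (z - x₀) = w :=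
  Iff.rfl

lemma supportFun_imageSub_lt_iff {f : F →L[ℝ] ℝ} :
    supportFun (imageSub e x₀ A : Set F) f < supportFun (imageSub e x₀ A' : Set F) f ↔
      supportFun (A : Set E) (f.comp (e : E →L[ℝ] F)) <
        supportFun (A' : Set E) (f.comp (e : E →L[ℝ] F)) := by
  have h (C : ConvexBody E) := supportFun_image_sub C.isCompact C.nonempty (e : E →L[ℝ] F) x₀ f
  exact (h A).symm ▸ (h A').symm ▸ sub_lt_sub_iff_right _

lemma DisjointGeneric.imageSub (hB : DisjointGeneric B) (e : E ≃L[ℝ] F) (x₀ : E) :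
    DisjointGeneric fun i ↦ imageSub e x₀ (B i) where
  disjoint i j hij :=
    disjoint_image_of_injective (e.injective.comp (sub_left_injective (b := x₀))) (hB.disjoint hij)
  tripleEnvelope := hB.tripleEnvelope.of_forall_exists fun f ↦
    ⟨f.comp (e.symm : F →L[ℝ] E), fun i j hij ↦ supportFun_imageSub_lt_iff.2 <| by
      simpa [ContinuousLinearMap.comp_assoc] using hij⟩

lemma hasEnvelope_of_imageSub {k : ℕ}
    (h : HasEnvelope (fun i ↦ supportFun (imageSub e x₀ (B i) : Set F)) k) :
    HasEnvelope (fun i ↦ supportFun (B i : Set E)) k :=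
  h.of_forall_exists fun f ↦ ⟨f.comp (e : E →L[ℝ] F), fun _ _ ↦ supportFun_imageSub_lt_iff.1⟩

lemma hasEnvelope_of_common_slope [Fintype ι] {B : ι → ConvexBody ℂ} (hB : DisjointGeneric B)
    {c : ℝ} (hc : ∀ i, ∃ z ∈ B i, z.re = c * z.im) (p : ℕ)
    (hcard : (p + p).choose p < Fintype.card ι) :
    HasEnvelope (fun i ↦ supportFun (B i : Set ℂ)) (p + 2) := by
  have hne : 1 + c * Complex.I ≠ 0 := fun h ↦ by simpa using congrArg Complex.re h
  let e : ℂ ≃L[ℝ] ℂ := ContinuousLinearEquiv.smulLeft (Units.mk0 _ hne)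
  have hB' := hB.imageSub e 0
  refine hasEnvelope_of_imageSub (hasEnvelope_of_meets_axis (fun i ↦ ?_) hB'.disjoint
    hB'.tripleEnvelope p hcard)
  obtain ⟨z, hz, hzc⟩ := hc i
  refine ⟨_, mem_imageSub.2 ⟨z, hz, rfl⟩, ?_⟩
  simp [e, Units.smul_def, hzc]

/-- The set of slopes `re z / im z` of the points of `A`, for `A` in the upper half-plane. -/
def slopeRange (A : Set ℂ) : Set ℝ := (fun z : ℂ ↦ z.re / z.im) '' A

lemma ordConnected_slopeRange {A : Set ℂ} (hA : IsPreconnected A) (hpos : ∀ z ∈ A, 0 < z.im) :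
    (slopeRange A).OrdConnected :=
  (hA.image _ (continuousOn_re_div_im hpos)).ordConnected

lemma exists_isGreatest_slopeRange {A : Set ℂ} (hA : IsCompact A) (hne : A.Nonempty)
    (hpos : ∀ z ∈ A, 0 < z.im) : ∃ r, IsGreatest (slopeRange A) r :=
  (hA.image_of_continuousOn (continuousOn_re_div_im hpos)).exists_isGreatest (hne.image _)

lemma hasEnvelope_of_disjoint_slopeRange [Fintype κ] {B : Option κ → ConvexBody ℂ}
    (hB : DisjointGeneric B) (hzero : 0 ∈ B none) (hpos : ∀ k, ∀ z ∈ B (some k), 0 < z.im)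
    (hslope : Pairwise (Disjoint on fun k ↦ slopeRange (B (some k)))) (m : ℕ)
    (hcard : (m + 1 + m).choose (m + 1) < Fintype.card κ) :
    HasEnvelope (fun i ↦ supportFun (B i : Set ℂ)) (m + 3) := by
  choose r hr using fun k ↦
    exists_isGreatest_slopeRange (B (some k)).isCompact (B (some k)).nonempty (hpos k)
  have hinj : r.Injective := fun k l hkl ↦ by
    by_contra hne
    exact (hslope hne).le_bot ⟨(hr k).1, hkl ▸ (hr l).1⟩
  let : LinearOrder κ := LinearOrder.lift' r hinj
  refine SlopeSeparated.hasEnvelope ⟨hzero, hpos, fun k l hkl z hz w hw ↦ ?_,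
    fun k ↦ hB.disjoint (Option.some_ne_none k).symm, hB.tripleEnvelope⟩ m hcard
  by_contra! hle
  have hzk : z.re / z.im ∈ slopeRange (B (some k)) := mem_image_of_mem _ hz
  have hzr : z.re / z.im ≤ r l := ((hr k).2 hzk).trans (le_of_lt hkl)
  have hord := ordConnected_slopeRange (B (some l)).convex.isPreconnected (hpos l)
  exact (hslope hkl.ne).le_bot ⟨hzk, hord.out (mem_image_of_mem _ hw) (hr l).1 ⟨hle, hzr⟩⟩

lemma hasEnvelope_of_im_pos [Fintype κ] {B : Option κ → ConvexBody ℂ}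
    (hB : DisjointGeneric B) (hzero : 0 ∈ B none) (hpos : ∀ k, ∀ z ∈ B (some k), 0 < z.im) (m : ℕ)
    (hcard : (m + 1 + m).choose (m + 1) * (m + 1 + (m + 1)).choose (m + 1) < Fintype.card κ) :
    HasEnvelope (fun i ↦ supportFun (B i : Set ℂ)) (m + 3) := by
  choose r hr using fun k ↦
    exists_isGreatest_slopeRange (B (some k)).isCompact (B (some k)).nonempty (hpos k)
  rcases exists_pairwiseDisjoint_or_common_mem (S := Finset.univ)
      (fun k ↦ ordConnected_slopeRange (B (some k)).convex.isPreconnected (hpos k)) hr _ _ hcard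
    with ⟨T, -, hT_card, hT⟩ | ⟨T, -, hT_card, c, hT⟩
  · let e : T ↪ κ := .subtype _
    refine .of_comp e.optionMap (hasEnvelope_of_disjoint_slopeRange
      (hB.comp_injective e.optionMap.injective) hzero (fun k ↦ hpos k) ?_ m (by simp [hT_card]))
    exact fun k l hkl ↦ hT k.2 l.2 fun h ↦ hkl (Subtype.ext h)
  · let e : T ↪ Option κ := (Embedding.subtype _).trans .some
    refine .of_comp e (hasEnvelope_of_common_slope (hB.comp_injective e.injective)
      (c := c) (fun k ↦ ?_) (m + 1) (by simp [hT_card]))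
    obtain ⟨z, hz, hzc⟩ := hT k k.2
    exact ⟨z, hz, (div_eq_iff (hpos k z hz).ne').1 hzc⟩

lemma im_pos_of_norm_le {x₀ z : ℂ} (hz : ‖z‖ ≤ ‖x₀‖) (hne : z ≠ x₀) :
    0 < (-(Complex.I * starRingEnd ℂ x₀) * (z - x₀)).im := by
  have hdist : 0 < Complex.normSq (z - x₀) := Complex.normSq_pos.2 (sub_ne_zero.2 hne)
  have hle : Complex.normSq z ≤ Complex.normSq x₀ := by
    simpa only [Complex.normSq_eq_norm_sq] using pow_le_pow_left₀ (norm_nonneg z) hz 2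
  simp only [Complex.normSq_apply, Complex.sub_re, Complex.sub_im] at hdist hle
  simp only [Complex.mul_im, Complex.neg_re, Complex.neg_im, Complex.mul_re, Complex.I_re,
    Complex.I_im, Complex.conj_re, Complex.conj_im, Complex.sub_re, Complex.sub_im]
  linarith

theorem hasEnvelope_of_disjointGeneric [Fintype ι] {B : ι → ConvexBody ℂ}
    (hB : DisjointGeneric B) (m : ℕ)
    (hcard : (m + 1 + m).choose (m + 1) * (m + 1 + (m + 1)).choose (m + 1) + 1 <
      Fintype.card ι) :
    HasEnvelope (fun i ↦ supportFun (B i : Set ℂ)) (m + 3) := by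
  classical
  have : Nontrivial ι := Fintype.one_lt_card_iff_nontrivial.1 (by lia)
  obtain ⟨x₀, hx₀, hmax⟩ := (isCompact_iUnion fun i ↦ (B i).isCompact).exists_isMaxOn
    (nonempty_iUnion.2 ⟨Classical.arbitrary ι, (B _).nonempty⟩) continuous_norm.continuousOn
  obtain ⟨i₀, hi₀⟩ := mem_iUnion.1 hx₀
  have hnorm {i : ι} {z : ℂ} (hz : z ∈ B i) : ‖z‖ ≤ ‖x₀‖ := hmax (mem_iUnion.2 ⟨i, hz⟩)
  have hne {i : ι} (hi : i ≠ i₀) {z : ℂ} (hz : z ∈ B i) : z ≠ x₀ :=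
    (hB.disjoint hi).ne_of_mem hz hi₀
  have hx₀_ne : x₀ ≠ 0 := by
    rintro rfl
    obtain ⟨i, hi⟩ := exists_ne i₀
    obtain ⟨z, hz⟩ := (B i).nonempty
    exact hne hi hz (norm_le_zero_iff.1 ((hnorm hz).trans_eq norm_zero))
  have hc : -(Complex.I * starRingEnd ℂ x₀) ≠ 0 := by simpa using hx₀_ne
  let e : ℂ ≃L[ℝ] ℂ := ContinuousLinearEquiv.smulLeft (Units.mk0 _ hc)
  let σ : Option {i // i ≠ i₀} ≃ ι := Equiv.optionSubtypeNe i₀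
  refine .of_comp σ.toEmbedding (hasEnvelope_of_imageSub (e := e) (x₀ := x₀)
    (hasEnvelope_of_im_pos ((hB.comp_injective σ.injective).imageSub e x₀) ?_ ?_ m ?_))
  · exact mem_imageSub.2 ⟨x₀, by simpa [σ] using hi₀, by simp⟩
  · rintro ⟨i, hi⟩ w hw
    obtain ⟨z, hz, rfl⟩ := mem_imageSub.1 hw
    exact im_pos_of_norm_le (hnorm hz) (hne hi hz)
  · have := Fintype.card_congr σ
    rw [Fintype.card_option] at this
    lia

theorem hasEnvelope_of_finrank_eq_two [Fintype ι] (hE : Module.finrank ℝ E = 2)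
    {B : ι → ConvexBody E} (hB : DisjointGeneric B) (m : ℕ)
    (hcard : (m + 1 + m).choose (m + 1) * (m + 1 + (m + 1)).choose (m + 1) + 1 <
      Fintype.card ι) :
    HasEnvelope (fun i ↦ supportFun (B i : Set E)) (m + 3) := by
  have : FiniteDimensional ℝ E := .of_finrank_pos (by lia)
  let e : E ≃L[ℝ] ℂ := .ofFinrankEq (hE.trans Complex.finrank_real_complex.symm)
  exact hasEnvelope_of_imageSub
    (hasEnvelope_of_disjointGeneric (hB.imageSub e 0) m hcard)

end Reduction

/-! ### Convex position and support functions -/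

section ConvexPosition

section General

variable {E : Type*} [NormedAddCommGroup E] [NormedSpace ℝ E] {A K : Set E}

lemma isCompact_convexJoin {s t : Set E} (hs : IsCompact s) (ht : IsCompact t) :
    IsCompact (convexJoin ℝ s t) := by
  have himage : convexJoin ℝ s t =
      (fun z : (E × E) × ℝ ↦ (1 - z.2) • z.1.1 + z.2 • z.1.2) '' ((s ×ˢ t) ×ˢ Icc (0 : ℝ) 1) := by
    ext x
    simp only [mem_convexJoin, segment_eq_image, mem_image, Prod.exists, mem_prod]
    grind
  exact himage ▸ ((hs.prod ht).prod isCompact_Icc).image (by fun_prop)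

lemma isCompact_convexHull_union {s t : Set E} (hs : IsCompact s) (hsc : Convex ℝ s)
    (hsne : s.Nonempty) (ht : IsCompact t) (htc : Convex ℝ t) (htne : t.Nonempty) :
    IsCompact (convexHull ℝ (s ∪ t)) := by
  rw [convexHull_union hsne htne, hsc.convexHull_eq, htc.convexHull_eq]
  exact isCompact_convexJoin hs ht

lemma exists_supportFun_lt_of_not_subset (hA : IsCompact A) (hK : IsCompact K)
    (hKc : Convex ℝ K) (hKne : K.Nonempty) (h : ¬A ⊆ K) :
    ∃ f : E →L[ℝ] ℝ, supportFun K f < supportFun A f := by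
  obtain ⟨p, hpA, hpK⟩ := not_subset.1 h
  obtain ⟨f, u, hfK, hfp⟩ := geometric_hahn_banach_closed_point hKc hK.isClosed hpK
  exact ⟨f, ((supportFun_lt_iff hK hKne).2 fun q hq ↦ (hfK q hq).trans hfp).trans_le
    (le_supportFun hA hpA)⟩

lemma not_subset_convexHull_of_lt {f : E →L[ℝ] ℝ} (hA : IsCompact A) (hne : A.Nonempty)
    (h : ∀ q ∈ K, f q < supportFun A f) : ¬A ⊆ convexHull ℝ K := by
  obtain ⟨p, hp, hpf⟩ := exists_supportFun_eq hA hne f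
  have hmin : convexHull ℝ K ⊆ {q | f q < supportFun A f} :=
    convexHull_min h (convex_halfSpace_lt f.isLinear _)
  exact fun hsub ↦ (hmin (hsub hp)).not_ge hpf.le

end General

lemma convexPos_iff_not_subset_convexHull {G : Set (Set Plane)} :
    ConvexPos G ↔ ∀ A ∈ G, ¬A ⊆ convexHull ℝ (⋃₀ (G \ {A})) := by
  refine forall₂_congr fun A hA ↦ not_congr ⟨fun h ↦ ?_, fun h ↦ ?_⟩
  · exact h ▸ (subset_sUnion_of_mem hA).trans (subset_convexHull ℝ _)
  · refine (convexHull_min (sUnion_subset fun B hB ↦ ?_) (convex_convexHull ℝ _)).antisymm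
      (convexHull_mono (sUnion_subset_sUnion sdiff_subset))
    by_cases hBA : B = A
    · exact hBA ▸ h
    · exact (subset_sUnion_of_mem (show B ∈ G \ {A} from ⟨hB, hBA⟩)).trans
        (subset_convexHull ℝ _)

lemma tripleEnvelope_of_genPos {F : Set (Set Plane)} (hF : ∀ A ∈ F, ConvexBody2 A)
    (hgen : GenPos F) : TripleEnvelope fun A : F ↦ supportFun (A : Set Plane) := by
  rintro ⟨A, hA⟩ ⟨B, hB⟩ ⟨C, hC⟩ hAB hAC hBC
  simp only [ne_eq, Subtype.mk.injEq] at hAB hAC hBC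
  have hAk := (hF A hA).2.1
  obtain ⟨hBn, hBk, hBc⟩ := hF B hB
  obtain ⟨hCn, hCk, hCc⟩ := hF C hC
  have hpos : ConvexPos {A, B, C} :=
    hgen _ (insert_subset hA (pair_subset hB hC))
      (ncard_eq_three.2 ⟨A, B, C, hAB, hAC, hBC, rfl⟩)
  have hunion : ⋃₀ (({A, B, C} : Set (Set Plane)) \ {A}) = B ∪ C := by
    rw [insert_sdiff_self_of_notMem (by simp [hAB, hAC]), sUnion_pair]
  have hnot := convexPos_iff_not_subset_convexHull.1 hpos A (mem_insert A _)
  rw [hunion] at hnot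
  have hK := isCompact_convexHull_union hBk hBc hBn hCk hCc hCn
  obtain ⟨f, hf⟩ := exists_supportFun_lt_of_not_subset hAk hK (convex_convexHull ℝ _)
    (hBn.inl.convexHull) hnot
  have hlt {X : Set Plane} (hne : X.Nonempty) (hX : IsCompact X) (hsub : X ⊆ B ∪ C) :
      supportFun X f < supportFun A f :=
    ((supportFun_le_iff hX hne).2 fun p hp ↦
      le_supportFun hK (subset_convexHull ℝ _ (hsub hp))).trans_lt hf
  exact ⟨f, hlt hBn hBk subset_union_left, hlt hCn hCk subset_union_right⟩

lemma convexPos_of_supportFun_lt {G : Set (Set Plane)} (hG : ∀ A ∈ G, ConvexBody2 A)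
    (h : ∀ A ∈ G, ∃ f : Plane →L[ℝ] ℝ, ∀ B ∈ G, B ≠ A → supportFun B f < supportFun A f) :
    ConvexPos G := by
  refine convexPos_iff_not_subset_convexHull.2 fun A hA ↦ ?_
  obtain ⟨f, hf⟩ := h A hA
  refine not_subset_convexHull_of_lt (hG A hA).2.1 (hG A hA).1 (f := f) ?_
  rintro q ⟨B, ⟨hB, hBA⟩, hq⟩
  exact (le_supportFun (hG B hB).2.1 hq).trans_lt (hf B hB hBA)

lemma exists_convexPos_of_hasEnvelope {F : Set (Set Plane)} (hF : ∀ A ∈ F, ConvexBody2 A) {k : ℕ}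
    (h : HasEnvelope (fun A : F ↦ supportFun (A : Set Plane)) k) :
    ∃ G ⊆ F, G.ncard = k ∧ ConvexPos G := by
  obtain ⟨G, hcard, hG⟩ := h
  refine ⟨Subtype.val '' (G : Set F), Subtype.coe_image_subset F _, ?_,
    convexPos_of_supportFun_lt (forall_mem_image.2 fun A _ ↦ hF A A.2) ?_⟩
  · rw [ncard_image_of_injective _ Subtype.val_injective, ncard_coe_finset, hcard]
  · rintro _ ⟨A, hA, rfl⟩
    obtain ⟨f, hf⟩ := hG A hA
    refine ⟨f, ?_⟩
    rintro _ ⟨B, hB, rfl⟩ hBA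
    exact hf B hB (ne_of_apply_ne Subtype.val hBA)

end ConvexPosition

theorem erdos_szekeres_disjoint_bodies_bound_general (n : ℕ) (hn : 3 ≤ n) (F : Set (Set Plane))
    (hcard : Nat.choose (2 * n - 5) (n - 2) * Nat.choose (2 * n - 4) (n - 2) + 2 ≤ F.ncard)
    (hF : ∀ A ∈ F, ConvexBody2 A) (hdisj : F.Pairwise Disjoint) (hgen : GenPos F) :
    ∃ G ⊆ F, G.ncard = n ∧ ConvexPos G := by
  obtain ⟨m, rfl⟩ := Nat.exists_eq_add_of_le' hn
  rw [show 2 * (m + 3) - 5 = m + 1 + m by lia, show 2 * (m + 3) - 4 = m + 1 + (m + 1) by lia,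
    show m + 3 - 2 = m + 1 by lia] at hcard
  let : Fintype F := (finite_of_ncard_ne_zero (by lia)).fintype
  rw [← Nat.card_coe_set_eq, Nat.card_eq_fintype_card] at hcard
  let B (A : F) : ConvexBody Plane :=
    ⟨A, (hF A A.2).2.2, (hF A A.2).2.1, (hF A A.2).1⟩
  have hB : DisjointGeneric B :=
    ⟨fun A C hAC ↦ hdisj A.2 C.2 (Subtype.coe_injective.ne hAC), tripleEnvelope_of_genPos hF hgen⟩
  exact exists_convexPos_of_hasEnvelope hF (hasEnvelope_of_finrank_eq_two (by simp) hB m hcard)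

/-- Quantitative Erdős–Szekeres for disjoint convex bodies. -/
theorem erdos_szekeres_disjoint_bodies_bound :
    ∀ n : ℕ, 3 ≤ n → ∀ F : Set (Set Plane), F.Finite →
      (Nat.choose (2 * n - 5) (n - 2) + 1) * Nat.choose (2 * n - 4) (n - 2) + 1 ≤ F.ncard →
      (∀ A ∈ F, ConvexBody2 A) → F.Pairwise Disjoint → GenPos F →
      ∃ G ⊆ F, G.ncard = n ∧ ConvexPos G := by
  intro n hn F _ hcard
  have hpos : 0 < Nat.choose (2 * n - 4) (n - 2) := Nat.choose_pos (by lia)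
  exact erdos_szekeres_disjoint_bodies_bound_general n hn F (by lia)
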